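/- arXiv:1512.01671 — 3 statements merged into one kernel-verified Lean document; each statement's English description precedes it below -/
import Mathlib

section
/- Let d ≥ 1, p ∈ (1,∞), and λ ∈ (−d, (p−1)d). Let η be a smooth nonnegative mollifier supported in B_1 with unit integral and η_ε(x) = ε^{−d}η(x/ε). Then for every f with ∫_{ℝ^d} |f(x)|^p |x|^λ dx < ∞, the mollifications f_ε = η_ε ∗ f are smooth, lie in the weighted space L^p(|x|^λ dx), and ∫_{ℝ^d} |f_ε(x) − f(x)|^p |x|^λ dx → 0 as ε → 0. -/
open MeasureTheory Filter Metric Set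
open scoped Topology ENNReal

noncomputable section

abbrev Ed (d : ℕ) := EuclideanSpace ℝ (Fin d)

/-- Truncated (away from the singularity) fractional-Laplacian integral. -/
noncomputable def fracLapTrunc (d : ℕ) (s : ℝ) (f : Ed d → ℝ) (x : Ed d) (ε : ℝ) : ℝ :=
  ∫ y in {y : Ed d | ε ≤ dist x y}, (f x - f y) / dist x y ^ ((d : ℝ) + 2 * s)

/-- Fractional Laplacian, as a principal value (limit of truncated integrals),
with normalization constant `Cds`. -/
noncomputable def fracLap (d : ℕ) (s Cds : ℝ) (f : Ed d → ℝ) (x : Ed d) : ℝ :=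
  Cds * limUnder (𝓝[>] (0:ℝ)) (fracLapTrunc d s f x)

/-- `V` is the distributional fractional Laplacian of `v`. -/
def IsDistFracLap (d : ℕ) (s Cds : ℝ) (v V : Ed d → ℝ) : Prop :=
  ∀ φ : Ed d → ℝ, ContDiff ℝ (⊤ : ℕ∞) φ → HasCompactSupport φ →
    ∫ x, v x * fracLap d s Cds φ x = ∫ x, V x * φ x

/-- The nonlocal quantity `l_{p,s}(f)(x) = ∫ |f x - f y|^p / |x-y|^{d+ps} dy`. -/
noncomputable def lps (d : ℕ) (p s : ℝ) (f : Ed d → ℝ) (x : Ed d) : ℝ :=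
  ∫ y, |f x - f y| ^ p / dist x y ^ ((d : ℝ) + p * s)

/-- A weight comparable to `|x|^{-γ₀}` on the unit ball and to `|x|^{-γ}` outside. -/
def TwoPowerWeight (d : ℕ) (ρ : Ed d → ℝ) (c C γ₀ γ : ℝ) : Prop :=
  0 < c ∧ c < C ∧
  (∀ᵐ x : Ed d, ‖x‖ ≤ 1 → c * ‖x‖ ^ (-γ₀) ≤ ρ x ∧ ρ x ≤ C * ‖x‖ ^ (-γ₀)) ∧
  (∀ᵐ x : Ed d, 1 < ‖x‖ → c * ‖x‖ ^ (-γ) ≤ ρ x ∧ ρ x ≤ C * ‖x‖ ^ (-γ))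

/-- Standard mollification `f_ε = η_ε ∗ f` with `η_ε(x) = ε^{-d} η(x/ε)`. -/
noncomputable def mollify (d : ℕ) (η : Ed d → ℝ) (ε : ℝ) (f : Ed d → ℝ) (x : Ed d) : ℝ :=
  ∫ y, (ε ^ (-(d:ℝ)) * η (ε⁻¹ • (x - y))) * f y

/-- A smooth nonnegative probability mollifier supported in the unit ball. -/
def IsMollifier (d : ℕ) (η : Ed d → ℝ) : Prop :=
  ContDiff ℝ (⊤ : ℕ∞) η ∧ (∀ x, 0 ≤ η x) ∧ tsupport η ⊆ closedBall (0 : Ed d) 1 ∧ ∫ x, η x = 1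

/-- Membership in the weighted Lebesgue space `L^p(ρ dx)`. -/
def MemWLp (d : ℕ) (p : ℝ) (ρ f : Ed d → ℝ) : Prop :=
  AEStronglyMeasurable f (volume : Measure (Ed d)) ∧
    Integrable (fun x => |f x| ^ p * ρ x)

/-- `v ∈ X_{p,s,ρ}` with distributional fractional Laplacian `V`. -/
def MemX (d : ℕ) (s Cds p : ℝ) (ρ : Ed d → ℝ) (v V : Ed d → ℝ) : Prop :=
  MemWLp d p ρ v ∧ IsDistFracLap d s Cds v V ∧
    MemWLp d (p / (p - 1)) (fun x => ρ x ^ (-(p / (p - 1) - 1))) V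

/-- Weighted `L^p` norm. -/
noncomputable def wNorm (d : ℕ) (p : ℝ) (ρ f : Ed d → ℝ) : ℝ :=
  (∫ x, |f x| ^ p * ρ x) ^ (1 / p)

/-- Norm of the space `X_{p,s,ρ}` (on the pair `(v, (−Δ)^s v)`). -/
noncomputable def xNorm (d : ℕ) (p : ℝ) (ρ : Ed d → ℝ) (v V : Ed d → ℝ) : ℝ :=
  Real.sqrt ((wNorm d p ρ v) ^ 2 +
    (wNorm d (p / (p - 1)) (fun x => ρ x ^ (-(p / (p - 1) - 1))) V) ^ 2)

/-- Riesz potential `I_{d,s} ∗ f` with kernel constant `κ`. -/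
noncomputable def riesz (d : ℕ) (s κ : ℝ) (f : Ed d → ℝ) (x : Ed d) : ℝ :=
  ∫ y, κ * ‖x - y‖ ^ (-((d:ℝ) - 2 * s)) * f y

end
/-!
The weight `|x|^λ` belongs to the Muckenhoupt class `A_p` exactly in the range `-d < λ < (p - 1) d`,
and the convergence holds for every `A_p` weight `w`. By Hölder's inequality, Tonelli's theorem and
the `A_p` condition on a doubled ball, averaging over balls of radius `r` is bounded on `L^p(w)`
uniformly in `r`. Since `|f_ε|` is at most a constant times such an average of `|f|`, the
mollifications are bounded on `L^p(w)` uniformly in `ε`; they converge uniformly on continuous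
compactly supported functions, which are dense.
-/

open Module ContinuousLinearMap
open scoped NNReal Convolution Pointwise

lemma rpow_le_rpow_abs_mul_rpow {s t : ℝ≥0∞} {c : ℝ≥0} (hc : c ≠ 0) (hst : s ≤ c * t)
    (hts : t ≤ c * s) (a : ℝ) : s ^ a ≤ (c : ℝ≥0∞) ^ |a| * t ^ a := by
  rcases le_total 0 a with ha | ha
  · rw [abs_of_nonneg ha, ← ENNReal.mul_rpow_of_nonneg _ _ ha]
    exact ENNReal.rpow_le_rpow hst ha
  · have hc0 : (c : ℝ≥0∞) ^ (-a) ≠ 0 := by simp [hc, ENNReal.rpow_eq_zero_iff]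
    have hctop : (c : ℝ≥0∞) ^ (-a) ≠ ∞ :=
      ENNReal.rpow_ne_top_of_nonneg (neg_nonneg.2 ha) ENNReal.coe_ne_top
    have hts' : t ^ (-a) ≤ (c : ℝ≥0∞) ^ (-a) * s ^ (-a) := by
      rw [← ENNReal.mul_rpow_of_nonneg _ _ (neg_nonneg.2 ha)]
      exact ENNReal.rpow_le_rpow hts (neg_nonneg.2 ha)
    rw [abs_of_nonpos ha, ← neg_neg a, ENNReal.rpow_neg s, ENNReal.rpow_neg t, neg_neg,
      ← div_eq_mul_inv, ENNReal.inv_le_iff_inv_le, ENNReal.inv_div (.inr hctop) (.inr hc0)]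
    exact ENNReal.div_le_of_le_mul' hts'

lemma setLAverage_ne_zero {α : Type*} [MeasurableSpace α] {μ : Measure α} {g : α → ℝ≥0∞}
    (hg : AEMeasurable g μ) (hg0 : ∀ᵐ x ∂μ, g x ≠ 0) {s : Set α} (hs0 : μ s ≠ 0) (hs : μ s ≠ ∞) :
    ⨍⁻ x in s, g x ∂μ ≠ 0 := by
  rw [setLAverage_eq]
  refine ENNReal.div_ne_zero.2 ⟨fun h ↦ hs0 (Measure.restrict_eq_zero.1 (ae_eq_bot.1 ?_)), hs⟩
  refine Filter.empty_mem_iff_bot.1 ?_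
  filter_upwards [(lintegral_eq_zero_iff' hg.restrict).1 h, ae_restrict_of_ae hg0] with x hx hx0
    using hx0 hx

section DualWeight

/-- The weight `w ^ (-1 / (p - 1))` dual to `w` in the Muckenhoupt condition. It is `ℝ≥0∞`-valued so
that it takes the value `∞` where `w` vanishes. -/
noncomputable def dualWeight {X : Type*} (p : ℝ) (w : X → ℝ≥0) (x : X) : ℝ≥0∞ :=
  (w x : ℝ≥0∞) ^ (-(p - 1)⁻¹)

lemma dualWeight_ne_zero {X : Type*} {p : ℝ} (hp : 1 < p) (w : X → ℝ≥0) (x : X) :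
    dualWeight p w x ≠ 0 := by
  simp [dualWeight, ENNReal.rpow_eq_zero_iff, hp.le, hp]

variable {α : Type*} [MeasurableSpace α] {ν : Measure α} {p : ℝ} {w : α → ℝ≥0}

lemma aemeasurable_dualWeight (hw : AEMeasurable w ν) : AEMeasurable (dualWeight p w) ν :=
  hw.coe_nnreal_ennreal.pow_const _

/-- Hölder's inequality for the factorization `F = (F w ^ p⁻¹) w ^ (-p⁻¹)`. -/
lemma lintegral_rpow_le_lintegral_rpow_mul_mul (hp : 1 < p) {F : α → ℝ≥0∞}
    (hF : AEMeasurable F ν) (hw : AEMeasurable w ν) (hw0 : ∀ᵐ x ∂ν, w x ≠ 0) :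
    (∫⁻ x, F x ∂ν) ^ p ≤
      (∫⁻ x, F x ^ p * w x ∂ν) * (∫⁻ x, dualWeight p w x ∂ν) ^ (p - 1) := by
  have hp0 : 0 < p := zero_lt_one.trans hp
  have hp1 : 0 < p - 1 := sub_pos.2 hp
  have hw' : AEMeasurable (fun x ↦ (w x : ℝ≥0∞)) ν := hw.coe_nnreal_ennreal
  have holder := ENNReal.lintegral_mul_le_Lp_mul_Lq ν (Real.HolderConjugate.conjExponent hp)
    (hF.mul (hw'.pow_const p⁻¹)) (hw'.pow_const (-p⁻¹))
  have hfactor : ∫⁻ x, F x ∂ν =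
      ∫⁻ x, ((F * fun x ↦ (w x : ℝ≥0∞) ^ p⁻¹) * fun x ↦ (w x : ℝ≥0∞) ^ (-p⁻¹)) x ∂ν := by
    refine lintegral_congr_ae ?_
    filter_upwards [hw0] with x hx
    simp only [Pi.mul_apply]
    rw [mul_assoc, ← ENNReal.rpow_add _ _ (by exact_mod_cast hx) ENNReal.coe_ne_top,
      add_neg_cancel, ENNReal.rpow_zero, mul_one]
  have hleft (x : α) : (F * fun x ↦ (w x : ℝ≥0∞) ^ p⁻¹) x ^ p = F x ^ p * w x := by
    simp only [Pi.mul_apply]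
    rw [ENNReal.mul_rpow_of_nonneg _ _ hp0.le, ENNReal.rpow_inv_rpow hp0.ne']
  have hright (x : α) :
      ((w x : ℝ≥0∞) ^ (-p⁻¹)) ^ p.conjExponent = dualWeight p w x := by
    rw [← ENNReal.rpow_mul, Real.conjExponent, dualWeight]
    congr 1
    field_simp
  simp only [hleft, hright] at holder
  rw [← hfactor] at holder
  refine (ENNReal.rpow_le_rpow holder hp0.le).trans_eq ?_
  rw [ENNReal.mul_rpow_of_nonneg _ _ hp0.le, ← ENNReal.rpow_mul, ← ENNReal.rpow_mul,
    one_div_mul_cancel hp0.ne', ENNReal.rpow_one, Real.conjExponent]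
  congr 2
  field_simp

end DualWeight

section BallIntegrals

variable {X : Type*} [PseudoMetricSpace X] [SecondCountableTopology X] [MeasurableSpace X]
  [OpensMeasurableSpace X]

lemma measurableSet_dist_snd_fst_le (r : ℝ) :
    MeasurableSet {z : X × X | dist z.2 z.1 ≤ r} :=
  measurableSet_le (measurable_snd.dist measurable_fst) measurable_const

lemma measurable_measure_closedBall (ν : Measure X) [SFinite ν] (r : ℝ) :
    Measurable fun x : X ↦ ν (closedBall x r) :=
  measurable_measure_prodMk_left (measurableSet_dist_snd_fst_le r)

lemma measurable_setLAverage_closedBall (ν : Measure X) [SFinite ν] (g : X → ℝ≥0∞) (r : ℝ) :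
    Measurable fun x : X ↦ ⨍⁻ y in closedBall x r, g y ∂ν := by
  have hnum := measurable_measure_closedBall (ν.withDensity g) r
  simp only [withDensity_apply _ measurableSet_closedBall] at hnum
  simp only [setLAverage_eq]
  exact hnum.div (measurable_measure_closedBall ν r)

lemma lintegral_setLIntegral_closedBall_swap {μ ν : Measure X} [SFinite μ] [SFinite ν] (r : ℝ)
    {H : X → X → ℝ≥0∞} (hH : AEMeasurable (Function.uncurry H) (ν.prod μ)) :
    ∫⁻ x, ∫⁻ y in closedBall x r, H x y ∂μ ∂ν = ∫⁻ y, ∫⁻ x in closedBall y r, H x y ∂ν ∂μ := by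
  have hswap := lintegral_lintegral_swap
    (f := fun x y ↦ {z : X × X | dist z.2 z.1 ≤ r}.indicator (Function.uncurry H) (x, y))
    (hH.indicator (measurableSet_dist_snd_fst_le r))
  convert hswap using 2 <;> ext x <;> rw [← lintegral_indicator measurableSet_closedBall]
  · rfl
  · simp only [indicator, mem_ofPred_eq, mem_closedBall, dist_comm, Function.uncurry_apply_pair]

end BallIntegrals

section HaarAverages

variable {E : Type*} [NormedAddCommGroup E] [NormedSpace ℝ E] [MeasurableSpace E] [BorelSpace E]
  [FiniteDimensional ℝ E] (μ : Measure E) [μ.IsAddHaarMeasure]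

lemma setLAverage_closedBall_le_of_subset {x y : E} {r c : ℝ} (hr : 0 ≤ r) (hc : 0 < c)
    (h : closedBall x r ⊆ closedBall y (c * r)) (g : E → ℝ≥0∞) :
    ⨍⁻ z in closedBall x r, g z ∂μ ≤
      ENNReal.ofReal (c ^ finrank ℝ E) * ⨍⁻ z in closedBall y (c * r), g z ∂μ := by
  have hc0 : ENNReal.ofReal (c ^ finrank ℝ E) ≠ 0 := by positivity
  rw [setLAverage_eq, setLAverage_eq, Measure.addHaar_closedBall_mul μ y hc.le hr,
    ← Measure.addHaar_closedBall_center μ x, ← mul_div_assoc,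
    ENNReal.mul_div_mul_left _ _ hc0 ENNReal.ofReal_ne_top]
  gcongr

lemma setLAverage_closedBall_zero_eq_comp_smul {R : ℝ} (hR : 0 < R) (g : E → ℝ≥0∞) :
    ⨍⁻ x in closedBall 0 R, g x ∂μ = ⨍⁻ x in closedBall 0 1, g (R • x) ∂μ := by
  have hR0 : ENNReal.ofReal (R ^ finrank ℝ E) ≠ 0 := by positivity
  have hball : (R • ·) ⁻¹' closedBall (0 : E) R = closedBall 0 1 := by
    ext x
    simp [norm_smul, abs_of_pos hR, hR]
  have hemb := measurableEmbedding_const_smul₀ (α := E) hR.ne'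
  have hsmul : ∫⁻ x in closedBall 0 R, g x ∂(μ.map (R • ·)) =
      ∫⁻ x in closedBall 0 1, g (R • x) ∂μ := by
    rw [hemb.restrict_map, hemb.lintegral_map, hball]
  rw [Measure.map_addHaar_smul μ hR.ne', Measure.restrict_smul, lintegral_smul_measure,
    smul_eq_mul, abs_of_pos (by positivity), ENNReal.ofReal_inv_of_pos (by positivity)] at hsmul
  rw [setLAverage_eq, setLAverage_eq, Measure.addHaar_closedBall' μ 0 hR.le, ← hsmul,
    ← ENNReal.div_eq_inv_mul, ENNReal.div_eq_inv_mul, ENNReal.mul_inv (.inl hR0)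
    (.inl ENNReal.ofReal_ne_top)]
  simp only [div_eq_mul_inv]
  ring

end HaarAverages

section Muckenhoupt

/-- The measure with density `w` with respect to `μ`, whose Lebesgue spaces are the weighted spaces
`L^p(w μ)`. -/
noncomputable abbrev weightedMeasure {X : Type*} [MeasurableSpace X] (w : X → ℝ≥0)
    (μ : Measure X) : Measure X :=
  μ.withDensity fun x ↦ (w x : ℝ≥0∞)

/-- The Muckenhoupt class `A_p`: over every ball, the average of `w` times the `(p - 1)`-st power of
the average of the dual weight is at most a constant. Local integrability of `w` is not a field: a
nonzero average of the dual weight makes it follow from the bound. -/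
structure IsMuckenhoupt {X : Type*} [PseudoMetricSpace X] [MeasurableSpace X] (p : ℝ)
    (w : X → ℝ≥0) (μ : Measure X) : Prop where
  aemeasurable : AEMeasurable w μ
  ae_ne_zero : ∀ᵐ x ∂μ, w x ≠ 0
  exists_bound : ∃ K : ℝ≥0, ∀ y, ∀ r > 0,
    (⨍⁻ x in closedBall y r, w x ∂μ) * (⨍⁻ x in closedBall y r, dualWeight p w x ∂μ) ^ (p - 1) ≤ K

section PseudoMetricSpace

variable {X : Type*} [MeasurableSpace X] [PseudoMetricSpace X] {μ : Measure X} {p : ℝ}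
  {w : X → ℝ≥0}

namespace IsMuckenhoupt

lemma absolutelyContinuous (hw : IsMuckenhoupt p w μ) : μ ≪ weightedMeasure w μ :=
  withDensity_absolutelyContinuous' hw.aemeasurable.coe_nnreal_ennreal
    (by simpa using hw.ae_ne_zero)

lemma lintegral_weightedMeasure (hw : IsMuckenhoupt p w μ) {F : X → ℝ≥0∞} (hF : AEMeasurable F μ) :
    ∫⁻ x, F x ∂weightedMeasure w μ = ∫⁻ x, F x * w x ∂μ := by
  simp_rw [lintegral_withDensity_eq_lintegral_mul₀ hw.aemeasurable.coe_nnreal_ennreal hF,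
    Pi.mul_apply, mul_comm]

variable [ProperSpace X] [IsFiniteMeasureOnCompacts μ] [μ.IsOpenPosMeasure]

lemma setLIntegral_closedBall_ne_top (hw : IsMuckenhoupt p w μ) (hp : 1 < p) (y : X) {r : ℝ}
    (hr : 0 < r) : ∫⁻ x in closedBall y r, w x ∂μ ≠ ∞ := by
  obtain ⟨K, hK⟩ := hw.exists_bound
  have hdual : (⨍⁻ x in closedBall y r, dualWeight p w x ∂μ) ^ (p - 1) ≠ 0 := by
    have := setLAverage_ne_zero (aemeasurable_dualWeight (p := p) hw.aemeasurable)
      (.of_forall (dualWeight_ne_zero hp w)) (measure_closedBall_pos μ y hr).ne'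
      measure_closedBall_lt_top.ne
    simp [ENNReal.rpow_eq_zero_iff, this, hp.le]
  rw [← measure_mul_setLAverage _ measure_closedBall_lt_top.ne]
  refine ENNReal.mul_ne_top measure_closedBall_lt_top.ne fun h ↦ ?_
  simpa [h, ENNReal.top_mul hdual] using hK y r hr

lemma setLIntegral_closedBall_dualWeight_ne_top (hw : IsMuckenhoupt p w μ) (hp : 1 < p) (y : X)
    {r : ℝ} (hr : 0 < r) : ∫⁻ x in closedBall y r, dualWeight p w x ∂μ ≠ ∞ := by
  obtain ⟨K, hK⟩ := hw.exists_bound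
  have havg : ⨍⁻ x in closedBall y r, w x ∂μ ≠ 0 :=
    setLAverage_ne_zero hw.aemeasurable.coe_nnreal_ennreal (by simpa using hw.ae_ne_zero)
      (measure_closedBall_pos μ y hr).ne' measure_closedBall_lt_top.ne
  rw [← measure_mul_setLAverage _ measure_closedBall_lt_top.ne]
  refine ENNReal.mul_ne_top measure_closedBall_lt_top.ne fun h ↦ ?_
  simpa [h, ENNReal.top_rpow_of_pos (sub_pos.2 hp), ENNReal.mul_top havg] using hK y r hr

lemma isLocallyFiniteMeasure [OpensMeasurableSpace X] (hw : IsMuckenhoupt p w μ) (hp : 1 < p) :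
    IsLocallyFiniteMeasure (weightedMeasure w μ) where
  finiteAtNhds y := ⟨closedBall y 1, closedBall_mem_nhds y one_pos, by
    rw [withDensity_apply _ measurableSet_closedBall]
    exact (hw.setLIntegral_closedBall_ne_top hp y one_pos).lt_top⟩

lemma locallyIntegrable (hw : IsMuckenhoupt p w μ) (hp : 1 < p) {F : Type*}
    [NormedAddCommGroup F] {f : X → F}
    (hf : MemLp f (ENNReal.ofReal p) (weightedMeasure w μ)) : LocallyIntegrable f μ := by
  have hp0 : 0 < p := zero_lt_one.trans hp
  have hfm : AEStronglyMeasurable f μ := hf.1.mono_ac hw.absolutelyContinuous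
  have hfin : ∫⁻ x, ‖f x‖ₑ ^ p * w x ∂μ < ∞ := by
    have h := lintegral_rpow_enorm_lt_top_of_eLpNorm_lt_top (by simpa using hp0)
      ENNReal.ofReal_ne_top hf.2
    rwa [ENNReal.toReal_ofReal hp0.le, hw.lintegral_weightedMeasure (hfm.enorm.pow_const p)] at h
  intro y
  refine ⟨closedBall y 1, closedBall_mem_nhds y one_pos, hfm.restrict, ?_⟩
  have holder := lintegral_rpow_le_lintegral_rpow_mul_mul (ν := μ.restrict (closedBall y 1)) hp
    hfm.enorm.restrict hw.aemeasurable.restrict (ae_restrict_of_ae hw.ae_ne_zero)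
  refine (ENNReal.rpow_lt_top_iff_of_pos hp0).1 (holder.trans_lt (ENNReal.mul_lt_top ?_ ?_))
  · exact (setLIntegral_le_lintegral _ _).trans_lt hfin
  · exact ENNReal.rpow_lt_top_of_nonneg (sub_pos.2 hp).le
      (hw.setLIntegral_closedBall_dualWeight_ne_top hp y one_pos)

end IsMuckenhoupt

end PseudoMetricSpace

section NormedSpace

variable {E : Type*} [NormedAddCommGroup E] [NormedSpace ℝ E] [MeasurableSpace E] [BorelSpace E]
  [FiniteDimensional ℝ E] {μ : Measure E} [μ.IsAddHaarMeasure] {p : ℝ} {w : E → ℝ≥0}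

namespace IsMuckenhoupt

lemma exists_setLIntegral_rpow_setLAverage_dualWeight_le (hw : IsMuckenhoupt p w μ) (hp : 1 < p) :
    ∃ C : ℝ≥0, ∀ y, ∀ r > 0,
      ∫⁻ x in closedBall y r, (⨍⁻ z in closedBall x r, dualWeight p w z ∂μ) ^ (p - 1)
        ∂weightedMeasure w μ ≤ C * μ (closedBall y r) := by
  obtain ⟨K, hK⟩ := hw.exists_bound
  have hp1 : 0 ≤ p - 1 := (sub_pos.2 hp).le
  set D : ℝ≥0 := Real.toNNReal (2 ^ finrank ℝ E)
  refine ⟨D ^ (p - 1) * D * K, fun y r hr ↦ ?_⟩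
  have hdouble {x : E} (hx : x ∈ closedBall y r) (g : E → ℝ≥0∞) :
      ⨍⁻ z in closedBall x r, g z ∂μ ≤ D * ⨍⁻ z in closedBall y (2 * r), g z ∂μ :=
    setLAverage_closedBall_le_of_subset μ hr.le two_pos
      (closedBall_subset_closedBall' (by linarith [mem_closedBall.1 hx])) g
  set S := ⨍⁻ z in closedBall y (2 * r), dualWeight p w z ∂μ
  set W := ⨍⁻ z in closedBall y (2 * r), w z ∂μ
  calc
    _ ≤ ∫⁻ _ in closedBall y r, (D * S) ^ (p - 1) ∂weightedMeasure w μ :=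
      setLIntegral_mono' measurableSet_closedBall fun x hx ↦
        ENNReal.rpow_le_rpow (hdouble hx _) hp1
    _ = (D * S) ^ (p - 1) * (μ (closedBall y r) * ⨍⁻ z in closedBall y r, w z ∂μ) := by
      rw [setLIntegral_const, withDensity_apply _ measurableSet_closedBall,
        measure_mul_setLAverage _ measure_closedBall_lt_top.ne]
    _ ≤ (D * S) ^ (p - 1) * (μ (closedBall y r) * (D * W)) := by
      gcongr
      exact hdouble (mem_closedBall_self hr.le) _
    _ = D ^ (p - 1) * D * (W * S ^ (p - 1)) * μ (closedBall y r) := by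
      rw [ENNReal.mul_rpow_of_nonneg _ _ hp1]
      ring
    _ ≤ D ^ (p - 1) * D * K * μ (closedBall y r) := by
      gcongr
      exact hK y (2 * r) (by positivity)
    _ = _ := by
      rw [ENNReal.coe_mul, ENNReal.coe_mul, ENNReal.coe_rpow_of_nonneg _ hp1]

lemma exists_lintegral_rpow_setLAverage_le (hw : IsMuckenhoupt p w μ) (hp : 1 < p) :
    ∃ C : ℝ≥0, ∀ F : E → ℝ≥0∞, AEMeasurable F μ → ∀ r > 0,
      ∫⁻ x, (⨍⁻ y in closedBall x r, F y ∂μ) ^ p ∂weightedMeasure w μ ≤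
        C * ∫⁻ x, F x ^ p ∂weightedMeasure w μ := by
  obtain ⟨C, hC⟩ := hw.exists_setLIntegral_rpow_setLAverage_dualWeight_le hp
  refine ⟨C, fun F hF r hr ↦ ?_⟩
  set ω := weightedMeasure w μ
  set B := μ (closedBall (0 : E) r)
  have hB (x : E) : μ (closedBall x r) = B := Measure.addHaar_closedBall_center μ x r
  have hB0 : B ≠ 0 := (measure_closedBall_pos μ 0 hr).ne'
  have hBtop : B ≠ ∞ := measure_closedBall_lt_top.ne
  set G : E → ℝ≥0∞ := fun x ↦ (⨍⁻ y in closedBall x r, dualWeight p w y ∂μ) ^ (p - 1)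
  have hG : Measurable G := (measurable_setLAverage_closedBall μ _ r).pow_const _
  set Φ : E → ℝ≥0∞ := fun y ↦ F y ^ p * w y
  have hΦ : AEMeasurable Φ μ := (hF.pow_const p).mul hw.aemeasurable.coe_nnreal_ennreal
  calc
    _ ≤ ∫⁻ x, (⨍⁻ y in closedBall x r, Φ y ∂μ) * G x ∂ω :=
      lintegral_mono fun x ↦ lintegral_rpow_le_lintegral_rpow_mul_mul hp
        (hF.restrict.smul_measure _) (hw.aemeasurable.restrict.smul_measure _)
        (Measure.ae_smul_measure (ae_restrict_of_ae hw.ae_ne_zero) _)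
    _ = B⁻¹ * ∫⁻ x, ∫⁻ y in closedBall x r, G x * Φ y ∂μ ∂ω := by
      rw [← lintegral_const_mul' _ _ (ENNReal.inv_ne_top.2 hB0)]
      refine lintegral_congr fun x ↦ ?_
      rw [setLAverage_eq, hB, lintegral_const_mul'' _ hΦ.restrict, ENNReal.div_eq_inv_mul]
      ring
    _ = B⁻¹ * ∫⁻ y, ∫⁻ x in closedBall y r, G x * Φ y ∂ω ∂μ := by
      rw [lintegral_setLIntegral_closedBall_swap r
        (hG.comp measurable_fst |>.aemeasurable.mul hΦ.comp_snd)]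
    _ ≤ B⁻¹ * ∫⁻ y, C * B * Φ y ∂μ := by
      gcongr with y
      rw [lintegral_mul_const _ hG, ← hB y]
      gcongr
      exact hC y r hr
    _ = C * ∫⁻ x, F x ^ p ∂ω := by
      rw [lintegral_const_mul'' _ hΦ, ← hw.lintegral_weightedMeasure (hF.pow_const p), ← mul_assoc,
        mul_left_comm, ENNReal.inv_mul_cancel hB0 hBtop, mul_one]

end IsMuckenhoupt

end NormedSpace

end Muckenhoupt

section PowerWeight

variable {E : Type*} [NormedAddCommGroup E] [NormedSpace ℝ E] [MeasurableSpace E] [BorelSpace E]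
  [FiniteDimensional ℝ E] (μ : Measure E) [μ.IsAddHaarMeasure]

lemma setLAverage_closedBall_zero_enorm_rpow (a : ℝ) {R : ℝ} (hR : 0 < R) :
    ⨍⁻ x in closedBall 0 R, ‖x‖ₑ ^ a ∂μ =
      ENNReal.ofReal R ^ a * ⨍⁻ x in closedBall 0 1, ‖x‖ₑ ^ a ∂μ := by
  have hR0 : ENNReal.ofReal R ^ a ≠ ∞ := by
    rw [ENNReal.ofReal_rpow_of_pos hR]
    exact ENNReal.ofReal_ne_top
  rw [setLAverage_closedBall_zero_eq_comp_smul μ hR]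
  simp_rw [enorm_smul, ENNReal.mul_rpow_of_ne_top enorm_ne_top enorm_ne_top,
    Real.enorm_eq_ofReal hR.le]
  rw [setLAverage_eq, setLAverage_eq, lintegral_const_mul' _ _ hR0, mul_div_assoc]

lemma setLAverage_closedBall_enorm_rpow_le_of_norm_le (a : ℝ) {y : E} {r : ℝ} (hr : 0 < r)
    (hyr : ‖y‖ ≤ 2 * r) :
    ⨍⁻ x in closedBall y r, ‖x‖ₑ ^ a ∂μ ≤
      ENNReal.ofReal (3 ^ finrank ℝ E) * (3 ^ |a| * ⨍⁻ x in closedBall 0 1, ‖x‖ₑ ^ a ∂μ) *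
        ENNReal.ofReal (max ‖y‖ r) ^ a := by
  have hsub : closedBall y r ⊆ closedBall 0 (3 * r) :=
    closedBall_subset_closedBall' (by rw [dist_zero_right]; linarith)
  have hmax : ENNReal.ofReal (3 * r) ^ a ≤ 3 ^ |a| * ENNReal.ofReal (max ‖y‖ r) ^ a := by
    refine rpow_le_rpow_abs_mul_rpow (c := 3) (by simp) ?_ ?_ a <;>
      rw [ENNReal.coe_ofNat, ← ENNReal.ofReal_ofNat 3, ← ENNReal.ofReal_mul (by simp)] <;>
      refine ENNReal.ofReal_le_ofReal ?_
    · linarith [le_max_right ‖y‖ r]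
    · exact max_le (by linarith) (by linarith)
  refine (setLAverage_closedBall_le_of_subset μ hr.le three_pos hsub _).trans ?_
  rw [setLAverage_closedBall_zero_enorm_rpow μ a (by positivity)]
  calc
    _ ≤ ENNReal.ofReal (3 ^ finrank ℝ E) * (3 ^ |a| * ENNReal.ofReal (max ‖y‖ r) ^ a *
        ⨍⁻ x in closedBall 0 1, ‖x‖ₑ ^ a ∂μ) := by gcongr
    _ = _ := by ring

lemma setLAverage_closedBall_enorm_rpow_le_of_lt_norm (a : ℝ) {y : E} {r : ℝ} (hr : 0 < r)
    (hyr : 2 * r < ‖y‖) :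
    ⨍⁻ x in closedBall y r, ‖x‖ₑ ^ a ∂μ ≤ 3 ^ |a| * ENNReal.ofReal (max ‖y‖ r) ^ a := by
  have hpoint (x : E) (hx : x ∈ closedBall y r) :
      ‖x‖ₑ ^ a ≤ 3 ^ |a| * ENNReal.ofReal (max ‖y‖ r) ^ a := by
    have hxy : |‖x‖ - ‖y‖| ≤ r :=
      (abs_norm_sub_norm_le x y).trans (mem_closedBall_iff_norm.1 hx)
    rw [abs_le] at hxy
    rw [max_eq_left (by linarith)]
    refine rpow_le_rpow_abs_mul_rpow (c := 3) (by simp) ?_ ?_ a <;>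
      rw [ENNReal.coe_ofNat, ← ENNReal.ofReal_ofNat 3, ← ofReal_norm x,
        ← ENNReal.ofReal_mul (by simp)] <;>
      exact ENNReal.ofReal_le_ofReal (by linarith)
  exact (laverage_mono_ae (ae_restrict_of_forall_mem measurableSet_closedBall hpoint)).trans
    (setLAverage_const (measure_closedBall_pos μ y hr).ne' measure_closedBall_lt_top.ne _).le

variable [Nontrivial E] {a : ℝ}

lemma setLAverage_closedBall_zero_one_enorm_rpow_ne_top (ha : -(finrank ℝ E : ℝ) < a) :
    ⨍⁻ x in closedBall 0 1, ‖x‖ₑ ^ a ∂μ ≠ ∞ := by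
  have hloc : LocallyIntegrable (fun x : E ↦ ‖x‖ ^ a) μ :=
    locallyIntegrable_of_norm_le_rpow (C := 1) (α := -a) finrank_pos (by linarith)
      (.of_forall fun x ↦ by simp [abs_of_nonneg (Real.rpow_nonneg (norm_nonneg x) a)])
      (measurable_norm.pow_const a).aestronglyMeasurable
  have hfin := (hloc.integrableOn_isCompact (isCompact_closedBall (0 : E) 1)).2
  rw [setLAverage_eq]
  refine ENNReal.div_ne_top (ne_of_lt ?_) (measure_closedBall_pos μ 0 one_pos).ne'
  refine lt_of_le_of_lt (lintegral_mono_ae ?_) hfin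
  filter_upwards [ae_restrict_of_ae (Measure.ae_ne μ 0)] with x hx
  rw [Real.enorm_eq_ofReal (Real.rpow_nonneg (norm_nonneg x) a),
    ← ENNReal.ofReal_rpow_of_pos (norm_pos_iff.2 hx), ofReal_norm]

lemma exists_setLAverage_closedBall_enorm_rpow_le (ha : -(finrank ℝ E : ℝ) < a) :
    ∃ K : ℝ≥0, ∀ (y : E), ∀ r > 0,
      ⨍⁻ x in closedBall y r, ‖x‖ₑ ^ a ∂μ ≤ K * ENNReal.ofReal (max ‖y‖ r) ^ a := by
  have h3 : (3 : ℝ≥0∞) ^ |a| ≠ ∞ := ENNReal.rpow_ne_top_of_nonneg (abs_nonneg a) (by simp)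
  obtain ⟨K, hK⟩ : ∃ K : ℝ≥0, (K : ℝ≥0∞) = ENNReal.ofReal (3 ^ finrank ℝ E) *
      (3 ^ |a| * ⨍⁻ x in closedBall 0 1, ‖x‖ₑ ^ a ∂μ) + 3 ^ |a| :=
    ⟨_, ENNReal.coe_toNNReal (ENNReal.add_ne_top.2 ⟨ENNReal.mul_ne_top ENNReal.ofReal_ne_top
      (ENNReal.mul_ne_top h3 (setLAverage_closedBall_zero_one_enorm_rpow_ne_top μ ha)), h3⟩)⟩
  refine ⟨K, fun y r hr ↦ ?_⟩
  rw [hK, add_mul]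
  rcases le_or_gt ‖y‖ (2 * r) with hyr | hyr
  · exact (setLAverage_closedBall_enorm_rpow_le_of_norm_le μ a hr hyr).trans le_self_add
  · exact (setLAverage_closedBall_enorm_rpow_le_of_lt_norm μ a hr hyr).trans le_add_self

lemma coe_nnnorm_rpow_ae_eq (a : ℝ) :
    (fun x : E ↦ ((‖x‖₊ ^ a : ℝ≥0) : ℝ≥0∞)) =ᵐ[μ] fun x ↦ ‖x‖ₑ ^ a := by
  filter_upwards [Measure.ae_ne μ 0] with x hx
  exact ENNReal.coe_rpow_of_ne_zero (nnnorm_ne_zero_iff.2 hx) a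

theorem isMuckenhoupt_nnnorm_rpow {p lam : ℝ} (hp : 1 < p) (hlam : -(finrank ℝ E : ℝ) < lam)
    (hlam' : lam < (p - 1) * finrank ℝ E) : IsMuckenhoupt p (fun x : E ↦ ‖x‖₊ ^ lam) μ where
  aemeasurable := by fun_prop
  ae_ne_zero := by
    filter_upwards [Measure.ae_ne μ 0] with x hx
    simp [NNReal.rpow_eq_zero_iff, hx]
  exists_bound := by
    have hp1 : 0 < p - 1 := sub_pos.2 hp
    set b := lam * -(p - 1)⁻¹ with hb
    have hbp : b * (p - 1) = -lam := by rw [hb]; field_simp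
    obtain ⟨K, hK⟩ := exists_setLAverage_closedBall_enorm_rpow_le μ hlam
    obtain ⟨L, hL⟩ := exists_setLAverage_closedBall_enorm_rpow_le μ (a := b)
      (by rw [hb, mul_neg, neg_lt_neg_iff, ← div_eq_mul_inv, div_lt_iff₀ hp1]; linarith)
    have hw := coe_nnnorm_rpow_ae_eq μ lam
    have hσ : dualWeight p (fun x : E ↦ ‖x‖₊ ^ lam) =ᵐ[μ] fun x ↦ ‖x‖ₑ ^ b := by
      filter_upwards [hw] with x hx
      rw [dualWeight, hx, ← ENNReal.rpow_mul]
    refine ⟨K * L ^ (p - 1), fun y r hr ↦ ?_⟩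
    rw [setLAverage_congr_fun_ae measurableSet_closedBall (hw.mono fun _ h _ ↦ h),
      setLAverage_congr_fun_ae measurableSet_closedBall (hσ.mono fun _ h _ ↦ h)]
    set m := ENNReal.ofReal (max ‖y‖ r)
    have hm : m ≠ 0 := (ENNReal.ofReal_pos.2 (lt_max_of_lt_right hr)).ne'
    calc
      _ ≤ (K * m ^ lam) * (L * m ^ b) ^ (p - 1) := by
        gcongr
        exacts [hK y r hr, hL y r hr]
      _ = K * L ^ (p - 1) * (m ^ lam * m ^ (-lam)) := by
        rw [ENNReal.mul_rpow_of_nonneg _ _ hp1.le, ← ENNReal.rpow_mul, hbp]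
        ring
      _ = (K * L ^ (p - 1) : ℝ≥0) := by
        rw [← ENNReal.rpow_add _ _ hm ENNReal.ofReal_ne_top, add_neg_cancel, ENNReal.rpow_zero,
          mul_one, ENNReal.coe_mul, ENNReal.coe_rpow_of_nonneg _ hp1.le]

end PowerWeight

section Dilate

variable {E : Type*} [NormedAddCommGroup E] [NormedSpace ℝ E]

/-- The dilation `η_ε(z) = ε⁻ᵈ η(z / ε)` of a kernel `η`, `d` being the dimension of `E`; it has the
same integral as `η`. -/
noncomputable def dilate (η : E → ℝ) (ε : ℝ) (z : E) : ℝ :=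
  ε ^ (-(finrank ℝ E : ℝ)) * η (ε⁻¹ • z)

variable {η : E → ℝ} {ε : ℝ}

lemma contDiff_dilate {n : WithTop ℕ∞} (hη : ContDiff ℝ n η) (ε : ℝ) : ContDiff ℝ n (dilate η ε) :=
  contDiff_const.mul (hη.comp (contDiff_const_smul ε⁻¹))

lemma continuous_dilate (hη : Continuous η) (ε : ℝ) : Continuous (dilate η ε) :=
  contDiff_zero.1 (contDiff_dilate (contDiff_zero.2 hη) ε)

lemma hasCompactSupport_dilate (hη : HasCompactSupport η) (hε : 0 < ε) :
    HasCompactSupport (dilate η ε) :=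
  (hη.comp_smul (inv_ne_zero hε.ne')).mul_left

lemma support_dilate_subset {R : ℝ} (hη : Function.support η ⊆ closedBall 0 R) (hε : 0 < ε) :
    Function.support (dilate η ε) ⊆ closedBall 0 (ε * R) := by
  intro z hz
  have hmem := hη (right_ne_zero_of_mul hz)
  rwa [mem_closedBall_zero_iff, norm_smul, norm_inv, Real.norm_of_nonneg hε.le,
    inv_mul_le_iff₀ hε, ← mem_closedBall_zero_iff] at hmem

lemma norm_dilate (η : E → ℝ) (hε : 0 ≤ ε) (z : E) : ‖dilate η ε z‖ = dilate (‖η ·‖) ε z := by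
  rw [dilate, dilate, norm_mul, Real.norm_of_nonneg (by positivity)]

variable [MeasurableSpace E] [BorelSpace E] [FiniteDimensional ℝ E] (μ : Measure E)
  [μ.IsAddHaarMeasure]

lemma integral_dilate (η : E → ℝ) (hε : 0 < ε) : ∫ z, dilate η ε z ∂μ = ∫ z, η z ∂μ := by
  simp only [dilate]
  rw [integral_const_mul, Measure.integral_comp_inv_smul_of_nonneg μ η hε.le, smul_eq_mul,
    Real.rpow_neg hε.le, Real.rpow_natCast, inv_mul_cancel_left₀ (by positivity)]

end Dilate

section ConvolutionDilate

variable {E : Type*} [NormedAddCommGroup E] [NormedSpace ℝ E] [MeasurableSpace E] [BorelSpace E]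
  [FiniteDimensional ℝ E] {μ : Measure E} [μ.IsAddHaarMeasure]
  {F : Type*} [NormedAddCommGroup F] [NormedSpace ℝ F]

lemma enorm_convolution_lsmul_le {k : E → ℝ} {M R : ℝ} (hk : ∀ z, ‖k z‖ ≤ M)
    (hksupp : Function.support k ⊆ closedBall 0 R) (f : E → F) (x : E) :
    ‖(k ⋆[lsmul ℝ ℝ, μ] f) x‖ₑ ≤ ENNReal.ofReal M * ∫⁻ y in closedBall x R, ‖f y‖ₑ ∂μ := by
  have hpoint (y : E) : ‖k (x - y) • f y‖ₑ ≤
      (closedBall x R).indicator (fun y ↦ ENNReal.ofReal M * ‖f y‖ₑ) y := by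
    by_cases hy : y ∈ closedBall x R
    · rw [indicator_of_mem hy, enorm_smul, ← ofReal_norm (k (x - y))]
      gcongr
      exact hk _
    · have hk0 : k (x - y) = 0 := Function.notMem_support.1 fun h ↦
        hy (mem_closedBall'.2 (by simpa [dist_eq_norm] using hksupp h))
      simp [hk0]
  rw [convolution_lsmul_swap]
  calc
    _ ≤ ∫⁻ y, ‖k (x - y) • f y‖ₑ ∂μ := enorm_integral_le_lintegral_enorm _
    _ ≤ ∫⁻ y in closedBall x R, ENNReal.ofReal M * ‖f y‖ₑ ∂μ :=
      (lintegral_mono hpoint).trans_eq (lintegral_indicator measurableSet_closedBall _)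
    _ = _ := lintegral_const_mul' _ _ ENNReal.ofReal_ne_top

lemma enorm_convolution_dilate_le {η : E → ℝ} {M R ε : ℝ} (hη : ∀ z, ‖η z‖ ≤ M)
    (hηsupp : Function.support η ⊆ closedBall 0 R) (hR : 0 ≤ R) (hε : 0 < ε) (f : E → F) (x : E) :
    ‖(dilate η ε ⋆[lsmul ℝ ℝ, μ] f) x‖ₑ ≤ ENNReal.ofReal M * μ (closedBall 0 R) *
      ⨍⁻ y in closedBall x (ε * R), ‖f y‖ₑ ∂μ := by
  have hbound (z : E) : ‖dilate η ε z‖ ≤ ε ^ (-(finrank ℝ E : ℝ)) * M := by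
    rw [norm_dilate η hε.le]
    exact mul_le_mul_of_nonneg_left (hη _) (by positivity)
  refine (enorm_convolution_lsmul_le hbound (support_dilate_subset hηsupp hε) f x).trans_eq ?_
  have hscale :
      ENNReal.ofReal (ε ^ (-(finrank ℝ E : ℝ))) * ENNReal.ofReal (ε ^ finrank ℝ E) = 1 := by
    rw [← ENNReal.ofReal_mul (by positivity), Real.rpow_neg hε.le, Real.rpow_natCast,
      inv_mul_cancel₀ (by positivity), ENNReal.ofReal_one]
  rw [← measure_mul_setLAverage _ measure_closedBall_lt_top.ne,
    Measure.addHaar_closedBall_mul μ x hε.le hR, ENNReal.ofReal_mul (by positivity)]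
  calc
    _ = ENNReal.ofReal (ε ^ (-(finrank ℝ E : ℝ))) * ENNReal.ofReal (ε ^ finrank ℝ E) *
        (ENNReal.ofReal M * μ (closedBall 0 R) * ⨍⁻ y in closedBall x (ε * R), ‖f y‖ₑ ∂μ) := by ring
    _ = _ := by rw [hscale, one_mul]

theorem tendstoUniformly_convolution_dilate [CompleteSpace F] {η : E → ℝ} (hη : Continuous η)
    (hηc : HasCompactSupport η) (hη1 : ∫ z, η z ∂μ = 1) {g : E → F} (hg : UniformContinuous g) :
    TendstoUniformly (fun ε ↦ dilate η ε ⋆[lsmul ℝ ℝ, μ] g) g (𝓝[>] 0) := by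
  obtain ⟨R, hR, hηR⟩ := hηc.isCompact.isBounded.subset_closedBall_lt 0 0
  rw [Metric.tendstoUniformly_iff]
  intro τ hτ
  set I := ∫ z, ‖η z‖ ∂μ
  have : 0 ≤ I := integral_nonneg fun _ ↦ norm_nonneg _
  obtain ⟨δ, hδ, hgδ⟩ := Metric.uniformContinuous_iff.1 hg (τ / (I + 1)) (by positivity)
  filter_upwards [Ioo_mem_nhdsGT (div_pos hδ hR)] with ε ⟨hε, hεδ⟩ x
  have hsupp : Function.support (dilate η ε) ⊆ ball 0 δ :=
    (support_dilate_subset ((subset_tsupport η).trans hηR) hε).trans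
      (closedBall_subset_ball ((lt_div_iff₀ hR).1 hεδ))
  have hint : Integrable (dilate η ε) μ :=
    (continuous_dilate hη ε).integrable_of_hasCompactSupport (hasCompactSupport_dilate hηc hε)
  have hdist := dist_convolution_le' (lsmul ℝ ℝ) (z₀ := g x) (by positivity) hint hsupp
    hg.continuous.aestronglyMeasurable fun y hy ↦ (hgδ (mem_ball.1 hy)).le
  simp only [lsmul_apply, integral_smul_const, integral_dilate μ η hε, hη1, one_smul,
    norm_dilate η hε.le, integral_dilate μ (‖η ·‖) hε] at hdist
  rw [dist_comm]
  calc
    _ ≤ ‖(lsmul ℝ ℝ : ℝ →L[ℝ] F →L[ℝ] F)‖ * I * (τ / (I + 1)) := hdist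
    _ ≤ 1 * I * (τ / (I + 1)) := by
      gcongr
      exact opNorm_lsmul_le
    _ < τ := by
      rw [one_mul, mul_div_left_comm]
      exact mul_lt_of_lt_one_right hτ ((div_lt_one (by positivity)).2 (lt_add_one I))

end ConvolutionDilate

section WeightedConvergence

lemma tendsto_eLpNorm_sub_of_tendstoUniformly {α ι G : Type*} [MeasurableSpace α]
    [NormedAddCommGroup G] {ν : Measure α} {l : Filter ι} {T : ι → α → G} {g : α → G} {q : ℝ≥0∞}
    {s : Set α} (hT : TendstoUniformly T g l) (hq : q ≠ ∞) (hs : MeasurableSet s) (hνs : ν s ≠ ∞)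
    (hTs : ∀ᶠ i in l, Function.support (T i) ⊆ s) (hgs : Function.support g ⊆ s) :
    Tendsto (fun i ↦ eLpNorm (T i - g) q ν) l (𝓝 0) := by
  rw [ENNReal.tendsto_nhds_zero]
  intro τ hτ
  have hν : ν s ^ (1 / q.toReal) ≠ ∞ := ENNReal.rpow_ne_top_of_nonneg (by positivity) hνs
  obtain ⟨c, hc, hcτ⟩ := ENNReal.exists_nnreal_pos_mul_lt hν hτ.ne'
  filter_upwards [hTs, Metric.tendstoUniformly_iff.1 hT c hc] with i his hi
  have hdist (x : α) : dist (T i x) (g x) ≤ c := by rw [dist_comm]; exact (hi x).le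
  refine (eLpNorm_sub_le_of_dist_bdd ν hq hs c.coe_nonneg hdist his hgs).trans ?_
  rw [ENNReal.ofReal_coe_nnreal]
  exact hcτ.le

variable {E : Type*} [NormedAddCommGroup E] [NormedSpace ℝ E] [MeasurableSpace E] [BorelSpace E]
  [FiniteDimensional ℝ E] {μ : Measure E} [μ.IsAddHaarMeasure] {p : ℝ} {w : E → ℝ≥0} {η : E → ℝ}
  {F : Type*} [NormedAddCommGroup F] [NormedSpace ℝ F]

theorem tendsto_eLpNorm_convolution_dilate_sub_of_hasCompactSupport [CompleteSpace F]
    (ν : Measure E) [IsFiniteMeasureOnCompacts ν] {q : ℝ≥0∞} (hq : q ≠ ∞) (hη : Continuous η)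
    (hηc : HasCompactSupport η) (hη1 : ∫ z, η z ∂μ = 1) {g : E → F} (hg : Continuous g)
    (hgc : HasCompactSupport g) :
    Tendsto (fun ε ↦ eLpNorm ((dilate η ε ⋆[lsmul ℝ ℝ, μ] g) - g) q ν) (𝓝[>] 0) (𝓝 0) := by
  obtain ⟨R, hR, hηR⟩ := hηc.isCompact.isBounded.subset_closedBall_lt 0 0
  have hK : IsCompact (closedBall (0 : E) R + tsupport g) :=
    (isCompact_closedBall 0 R).add hgc.isCompact
  refine tendsto_eLpNorm_sub_of_tendstoUniformly
    (tendstoUniformly_convolution_dilate hη hηc hη1 (hgc.uniformContinuous_of_continuous hg)) hq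
    hK.measurableSet hK.measure_ne_top ?_ ?_
  · filter_upwards [Ioo_mem_nhdsGT one_pos] with ε ⟨hε, hε1⟩
    refine (support_convolution_subset _).trans (add_subset_add ?_ (subset_tsupport g))
    exact (support_dilate_subset ((subset_tsupport η).trans hηR) hε).trans
      (closedBall_subset_closedBall (mul_le_of_le_one_left hR.le hε1.le))
  · exact (subset_tsupport g).trans
      (subset_add_right _ (mem_closedBall_self hR.le))

namespace IsMuckenhoupt

theorem exists_eLpNorm_convolution_dilate_le (hw : IsMuckenhoupt p w μ) (hp : 1 < p)
    (hη : Continuous η) (hηc : HasCompactSupport η) :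
    ∃ C : ℝ≥0, ∀ f : E → F, AEStronglyMeasurable f μ → ∀ ε > 0,
      eLpNorm (dilate η ε ⋆[lsmul ℝ ℝ, μ] f) (ENNReal.ofReal p) (weightedMeasure w μ) ≤
        C * eLpNorm f (ENNReal.ofReal p) (weightedMeasure w μ) := by
  have hp0 : 0 < p := zero_lt_one.trans hp
  obtain ⟨C, hC⟩ := hw.exists_lintegral_rpow_setLAverage_le hp
  obtain ⟨M, hM⟩ := hηc.exists_bound_of_continuous hη
  obtain ⟨R, hR, hηR⟩ := hηc.isCompact.isBounded.subset_closedBall_lt 0 0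
  obtain ⟨A, hA⟩ : ∃ A : ℝ≥0, (A : ℝ≥0∞) = ENNReal.ofReal M * μ (closedBall 0 R) :=
    ⟨_, ENNReal.coe_toNNReal
      (ENNReal.mul_ne_top ENNReal.ofReal_ne_top measure_closedBall_lt_top.ne)⟩
  refine ⟨A * C ^ (1 / p), fun f hf ε hε ↦ ?_⟩
  calc
    _ ≤ A • eLpNorm (fun x ↦ ⨍⁻ y in closedBall x (ε * R), ‖f y‖ₑ ∂μ) (ENNReal.ofReal p)
        (weightedMeasure w μ) := by
      refine eLpNorm_le_nnreal_smul_eLpNorm_of_ae_le_mul' (.of_forall fun x ↦ ?_) _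
      rw [hA, enorm_eq_self]
      exact enorm_convolution_dilate_le hM ((subset_tsupport η).trans hηR) hR.le hε f x
    _ ≤ A • (C ^ (1 / p) * eLpNorm f (ENNReal.ofReal p) (weightedMeasure w μ)) := by
      simp only [eLpNorm_eq_lintegral_rpow_enorm_toReal (ENNReal.ofReal_pos.2 hp0).ne'
        ENNReal.ofReal_ne_top, ENNReal.toReal_ofReal hp0.le, enorm_eq_self]
      rw [← ENNReal.mul_rpow_of_nonneg _ _ (by positivity)]
      gcongr
      exact hC _ hf.enorm _ (by positivity)
    _ = _ := by
      rw [ENNReal.smul_def, smul_eq_mul, ENNReal.coe_mul,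
        ENNReal.coe_rpow_of_nonneg _ (by positivity), mul_assoc]

theorem memLp_convolution_dilate (hw : IsMuckenhoupt p w μ) (hp : 1 < p) (hη : Continuous η)
    (hηc : HasCompactSupport η) {f : E → F}
    (hf : MemLp f (ENNReal.ofReal p) (weightedMeasure w μ)) {ε : ℝ} (hε : 0 < ε) :
    MemLp (dilate η ε ⋆[lsmul ℝ ℝ, μ] f) (ENNReal.ofReal p) (weightedMeasure w μ) := by
  obtain ⟨C, hC⟩ := hw.exists_eLpNorm_convolution_dilate_le (F := F) hp hη hηc
  have hcont : Continuous (dilate η ε ⋆[lsmul ℝ ℝ, μ] f) :=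
    (hasCompactSupport_dilate hηc hε).continuous_convolution_left _ (continuous_dilate hη ε)
      (hw.locallyIntegrable hp hf)
  exact ⟨hcont.aestronglyMeasurable, (hC f (hf.1.mono_ac hw.absolutelyContinuous) ε hε).trans_lt
    (ENNReal.mul_lt_top ENNReal.coe_lt_top hf.2)⟩

lemma eLpNorm_convolution_dilate_sub_le_add (hw : IsMuckenhoupt p w μ) (hp : 1 < p)
    (hη : Continuous η) (hηc : HasCompactSupport η) {f g : E → F}
    (hf : MemLp f (ENNReal.ofReal p) (weightedMeasure w μ))
    (hg : MemLp g (ENNReal.ofReal p) (weightedMeasure w μ)) {ε : ℝ} (hε : 0 < ε) :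
    eLpNorm ((dilate η ε ⋆[lsmul ℝ ℝ, μ] f) - f) (ENNReal.ofReal p) (weightedMeasure w μ) ≤
      eLpNorm (dilate η ε ⋆[lsmul ℝ ℝ, μ] (f - g)) (ENNReal.ofReal p) (weightedMeasure w μ) +
        eLpNorm ((dilate η ε ⋆[lsmul ℝ ℝ, μ] g) - g) (ENNReal.ofReal p) (weightedMeasure w μ) +
        eLpNorm (f - g) (ENNReal.ofReal p) (weightedMeasure w μ) := by
  set k := dilate η ε
  have hp1 : 1 ≤ ENNReal.ofReal p := by simpa using hp.le
  have hconv {h : E → F} (hh : MemLp h (ENNReal.ofReal p) (weightedMeasure w μ)) :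
      ConvolutionExists k h (lsmul ℝ ℝ) μ :=
    (hasCompactSupport_dilate hηc hε).convolutionExists_left _ (continuous_dilate hη ε)
      (hw.locallyIntegrable hp hh)
  have hfg := hf.sub hg
  have hkfg := hw.memLp_convolution_dilate hp hη hηc hfg hε
  have hkg := (hw.memLp_convolution_dilate hp hη hηc hg hε).sub hg
  have hsplit : (k ⋆[lsmul ℝ ℝ, μ] f) - f =
      (k ⋆[lsmul ℝ ℝ, μ] (f - g)) + ((k ⋆[lsmul ℝ ℝ, μ] g) - g) - (f - g) := by
    nth_rw 1 [← sub_add_cancel f g]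
    rw [(hconv hfg).distrib_add (hconv hg)]
    abel
  rw [hsplit]
  refine (eLpNorm_sub_le (hkfg.add hkg).1 hfg.1 hp1).trans ?_
  gcongr
  exact eLpNorm_add_le hkfg.1 hkg.1 hp1

theorem tendsto_eLpNorm_convolution_dilate_sub [CompleteSpace F] (hw : IsMuckenhoupt p w μ)
    (hp : 1 < p) (hη : Continuous η) (hηc : HasCompactSupport η) (hη1 : ∫ z, η z ∂μ = 1)
    {f : E → F} (hf : MemLp f (ENNReal.ofReal p) (weightedMeasure w μ)) :
    Tendsto (fun ε ↦ eLpNorm ((dilate η ε ⋆[lsmul ℝ ℝ, μ] f) - f) (ENNReal.ofReal p)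
      (weightedMeasure w μ)) (𝓝[>] 0) (𝓝 0) := by
  have : IsLocallyFiniteMeasure (weightedMeasure w μ) := hw.isLocallyFiniteMeasure hp
  obtain ⟨C, hC⟩ := hw.exists_eLpNorm_convolution_dilate_le (F := F) hp hη hηc
  rw [ENNReal.tendsto_nhds_zero]
  intro τ hτ
  obtain ⟨t, ht, htτ⟩ := ENNReal.exists_nnreal_pos_mul_lt (a := C + 2) (by finiteness) hτ.ne'
  have ht' : 0 < (t : ℝ≥0∞) := ENNReal.coe_pos.2 ht
  obtain ⟨g, hgc, hfg, hg, hgLp⟩ :=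
    hf.exists_hasCompactSupport_eLpNorm_sub_le ENNReal.ofReal_ne_top ht'.ne'
  have hlim := tendsto_eLpNorm_convolution_dilate_sub_of_hasCompactSupport (weightedMeasure w μ)
    (ENNReal.ofReal_ne_top (r := p)) hη hηc hη1 hg hgc
  filter_upwards [ENNReal.tendsto_nhds_zero.1 hlim t ht', self_mem_nhdsWithin] with ε hgε hε
  have hkfg := (hC (f - g) ((hf.sub hgLp).1.mono_ac hw.absolutelyContinuous) ε hε).trans
    (mul_le_mul_right hfg _)
  calc
    _ ≤ _ := hw.eLpNorm_convolution_dilate_sub_le_add hp hη hηc hf hgLp hε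
    _ ≤ C * t + t + t := add_le_add (add_le_add hkfg hgε) hfg
    _ = t * (C + 2) := by ring
    _ ≤ τ := htτ.le

end IsMuckenhoupt

end WeightedConvergence

section Integrals

variable {α F : Type*} [MeasurableSpace α] [NormedAddCommGroup F] {μ : Measure α} {w : α → ℝ≥0}
  {p : ℝ} {f : α → F}

lemma integrable_norm_rpow_mul_iff_memLp (hp : 0 < p) (hw : AEMeasurable w μ)
    (hf : AEStronglyMeasurable f μ) :
    Integrable (fun x ↦ ‖f x‖ ^ p * w x) μ ↔ MemLp f (ENNReal.ofReal p) (weightedMeasure w μ) := by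
  rw [← integrable_norm_rpow_iff (hf.mono_ac (withDensity_absolutelyContinuous _ _))
    (ENNReal.ofReal_pos.2 hp).ne' ENNReal.ofReal_ne_top, ENNReal.toReal_ofReal hp.le,
    integrable_withDensity_iff_integrable_smul₀ hw]
  simp only [NNReal.smul_def, smul_eq_mul, mul_comm]

lemma integral_norm_rpow_mul_eq_toReal_eLpNorm_rpow (hp : 0 < p) (hw : AEMeasurable w μ)
    (hf : MemLp f (ENNReal.ofReal p) (weightedMeasure w μ)) :
    ∫ x, ‖f x‖ ^ p * w x ∂μ =
      (eLpNorm f (ENNReal.ofReal p) (weightedMeasure w μ)).toReal ^ p := by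
  have hnonneg : 0 ≤ ∫ x, ‖f x‖ ^ p ∂weightedMeasure w μ :=
    integral_nonneg fun x ↦ by positivity
  rw [hf.eLpNorm_eq_integral_rpow_norm (ENNReal.ofReal_pos.2 hp).ne' ENNReal.ofReal_ne_top,
    ENNReal.toReal_ofReal hp.le, ENNReal.toReal_ofReal (by positivity),
    Real.rpow_inv_rpow hnonneg hp.ne', integral_withDensity_eq_integral_smul₀ hw]
  simp only [NNReal.smul_def, smul_eq_mul, mul_comm]

end Integrals

theorem stmt2_general {E F : Type*} [NormedAddCommGroup E] [NormedSpace ℝ E] [MeasurableSpace E]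
    [BorelSpace E] [FiniteDimensional ℝ E] {μ : Measure E} [μ.IsAddHaarMeasure]
    [NormedAddCommGroup F] [NormedSpace ℝ F] [CompleteSpace F] {p : ℝ} (hp : 1 < p) {w : E → ℝ≥0}
    (hw : IsMuckenhoupt p w μ) {n : ℕ∞} {η : E → ℝ} (hη : ContDiff ℝ n η)
    (hηc : HasCompactSupport η) (hη1 : ∫ z, η z ∂μ = 1) {f : E → F} (hf : AEStronglyMeasurable f μ)
    (hfi : Integrable (fun x ↦ ‖f x‖ ^ p * w x) μ) :
    (∀ ε > 0, ContDiff ℝ n (dilate η ε ⋆[lsmul ℝ ℝ, μ] f) ∧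
      Integrable (fun x ↦ ‖(dilate η ε ⋆[lsmul ℝ ℝ, μ] f) x‖ ^ p * w x) μ) ∧
    Tendsto (fun ε ↦ ∫ x, ‖(dilate η ε ⋆[lsmul ℝ ℝ, μ] f) x - f x‖ ^ p * w x ∂μ)
      (𝓝[>] 0) (𝓝 0) := by
  have hp0 : 0 < p := zero_lt_one.trans hp
  have hfLp := (integrable_norm_rpow_mul_iff_memLp hp0 hw.aemeasurable hf).1 hfi
  have hLp {ε : ℝ} (hε : 0 < ε) := hw.memLp_convolution_dilate hp hη.continuous hηc hfLp hε
  refine ⟨fun ε hε ↦ ⟨?_, ?_⟩, ?_⟩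
  · exact (hasCompactSupport_dilate hηc hε).contDiff_convolution_left _ (contDiff_dilate hη ε)
      (hw.locallyIntegrable hp hfLp)
  · exact (integrable_norm_rpow_mul_iff_memLp hp0 hw.aemeasurable
      ((hLp hε).1.mono_ac hw.absolutelyContinuous)).2 (hLp hε)
  · have hlim := hw.tendsto_eLpNorm_convolution_dilate_sub hp hη.continuous hηc hη1 hfLp
    have hlim' := ((ENNReal.tendsto_toReal ENNReal.zero_ne_top).comp hlim).rpow_const (p := p)
      (.inr hp0.le)
    rw [ENNReal.toReal_zero, Real.zero_rpow hp0.ne'] at hlim'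
    refine hlim'.congr' ?_
    filter_upwards [self_mem_nhdsWithin] with ε hε
    exact (integral_norm_rpow_mul_eq_toReal_eLpNorm_rpow hp0 hw.aemeasurable
      ((hLp hε).sub hfLp)).symm

lemma mollify_eq_convolution (d : ℕ) (η : Ed d → ℝ) (ε : ℝ) (f : Ed d → ℝ) :
    mollify d η ε f = dilate η ε ⋆[lsmul ℝ ℝ] f := by
  ext x
  simp only [mollify, convolution_lsmul_swap, dilate, finrank_euclideanSpace_fin, smul_eq_mul]

lemma IsMollifier.hasCompactSupport {d : ℕ} {η : Ed d → ℝ} (hη : IsMollifier d η) :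
    HasCompactSupport η :=
  (isCompact_closedBall 0 1).of_isClosed_subset (isClosed_tsupport η) hη.2.2.1

theorem stmt2 (d : ℕ) (hd : 1 ≤ d) (p lam : ℝ) (hp : 1 < p)
    (hl1 : -(d:ℝ) < lam) (hl2 : lam < (p - 1) * d)
    (η : Ed d → ℝ) (hη : IsMollifier d η)
    (f : Ed d → ℝ) (hf : AEStronglyMeasurable f (volume : Measure (Ed d)))
    (hfi : Integrable (fun x : Ed d => |f x| ^ p * ‖x‖ ^ lam)) :
    (∀ ε > (0:ℝ), ContDiff ℝ (⊤ : ℕ∞) (mollify d η ε f) ∧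
      Integrable (fun x : Ed d => |mollify d η ε f x| ^ p * ‖x‖ ^ lam)) ∧
    Tendsto (fun ε : ℝ => ∫ x : Ed d, |mollify d η ε f x - f x| ^ p * ‖x‖ ^ lam)
      (𝓝[>] (0:ℝ)) (𝓝 0) := by
  have : Nontrivial (Ed d) :=
    nontrivial_of_finrank_pos (R := ℝ) (by rw [finrank_euclideanSpace_fin]; exact hd)
  have hw : IsMuckenhoupt p (fun x : Ed d ↦ ‖x‖₊ ^ lam) volume :=
    isMuckenhoupt_nnnorm_rpow volume hp (by simpa using hl1) (by simpa using hl2)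
  simpa [mollify_eq_convolution] using
    stmt2_general hp hw hη.1 hη.hasCompactSupport hη.2.2.2 hf (by simpa using hfi)
end

section
/- Let d ≥ 1, s ∈ (0,1), p ∈ (1,∞), and Λ ≥ −d − ps. Suppose v ∈ C^∞(ℝ^d) satisfies ∫_{|y|>1} |v(y)|^p |y|^Λ dy < ∞. Then the classical fractional Laplacian (−Δ)^s v(x) = C_{d,s} p.v. ∫_{ℝ^d} (v(x)−v(y))/|x−y|^{d+2s} dy is well defined and continuous on ℝ^d, and it coincides with the distributional fractional Laplacian of v: for all φ ∈ C_c^∞(ℝ^d), ∫_{ℝ^d} v(x) (−Δ)^s φ(x) dx = ∫_{ℝ^d} (−Δ)^s v(x) φ(x) dx. -/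
open MeasureTheory Filter Metric Set
open scoped Topology ENNReal

/-
After symmetrization in `h`, the principal value becomes the absolutely convergent integral of
`2 f(x) - f(x + h) - f(x - h)` against `‖h‖ ^ (-α) / 2`, where `α = d + 2 s`. Split the kernel into
a singular core supported in the unit ball and a bounded continuous tail. The second difference is
`O(‖h‖ ^ 2)`, which tames the core because `α < d + 2`. The tail varies slowly: translating it by
`x` costs at most a factor `(1 + ‖x‖) ^ α`, so it can be integrated against `v` as soon as
`v ‖·‖ ^ (-α)` is integrable at infinity, and Young's inequality derives this from the weighted
`L^p` bound. Both parts depend continuously on `x` by dominated convergence. Duality is Fubini's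
theorem on pairs `(x, h)`: for fixed `h`, translation invariance of the measure makes
`f ↦ 2 f - f(· + h) - f(· - h)` symmetric.
-/

open Module

section RpowInequalities

lemma rpow_neg_le_rpow_mul_rpow_neg {a b c α : ℝ} (ha : 0 < a) (hc : 0 < c) (hα : 0 ≤ α)
    (h : a ≤ c * b) : b ^ (-α) ≤ c ^ α * a ^ (-α) := by
  have hac : a / c ≤ b := (div_le_iff₀' hc).2 h
  calc b ^ (-α) ≤ (a / c) ^ (-α) :=
        Real.rpow_le_rpow_of_nonpos (by positivity) hac (neg_nonpos.2 hα)
    _ = c ^ α * a ^ (-α) := by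
        rw [Real.div_rpow ha.le hc.le, Real.rpow_neg hc.le, div_inv_eq_mul, mul_comm]

lemma mul_rpow_neg_le_young {p : ℝ} (hp : 1 < p) (Λ α : ℝ) {a r : ℝ} (ha : 0 ≤ a) (hr : 0 < r) :
    a * r ^ (-α) ≤ a ^ p * r ^ Λ / p + r ^ (-((Λ + p * α) / (p - 1))) / p.conjExponent := by
  have hp0 : p ≠ 0 := (zero_lt_one.trans hp).ne'
  have hp1 : p - 1 ≠ 0 := (sub_pos.2 hp).ne'
  have hprod : a * r ^ (-α) = (a * r ^ (Λ / p)) * r ^ (-(α + Λ / p)) := by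
    rw [mul_assoc, ← Real.rpow_add hr]
    ring_nf
  have hfst : (a * r ^ (Λ / p)) ^ p = a ^ p * r ^ Λ := by
    rw [Real.mul_rpow ha (by positivity), ← Real.rpow_mul hr.le, div_mul_cancel₀ Λ hp0]
  have hsnd : (r ^ (-(α + Λ / p))) ^ p.conjExponent = r ^ (-((Λ + p * α) / (p - 1))) := by
    rw [← Real.rpow_mul hr.le, Real.conjExponent]
    congr 1
    field_simp
    ring
  rw [hprod, ← hfst, ← hsnd]
  exact Real.young_inequality_of_nonneg (by positivity) (by positivity)
    (Real.HolderConjugate.conjExponent hp)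

end RpowInequalities

section SecondDifference

/-- The symmetric second difference of `f` at `x` with step `h`, with the sign of `-Δ`: it is
`2 f(x) - f(x + h) - f(x - h)`. -/
def secondDiff {E F : Type*} [AddCommGroup E] [AddCommGroup F] (f : E → F) (x h : E) : F :=
  (f x - f (x + h)) + (f x - f (x - h))

variable {E F : Type*} [NormedAddCommGroup E] [NormedAddCommGroup F]

lemma continuous_secondDiff {f : E → F} (hf : Continuous f) :
    Continuous fun z : E × E => secondDiff f z.1 z.2 := by
  unfold secondDiff
  fun_prop

variable [NormedSpace ℝ E] [NormedSpace ℝ F]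

lemma norm_secondDiff_le {f : E → F} (hf : ContDiff ℝ 2 f) {x h : E} {M : ℝ}
    (hM : ∀ z ∈ closedBall x ‖h‖, ‖fderiv ℝ (fderiv ℝ f) z‖ ≤ M) :
    ‖secondDiff f x h‖ ≤ 2 * M * ‖h‖ ^ 2 := by
  have hdf : Differentiable ℝ f := hf.differentiable two_ne_zero
  have hddf : Differentiable ℝ (fderiv ℝ f) :=
    (hf.fderiv_right (m := 1) le_rfl).differentiable one_ne_zero
  have hderiv : ∀ k ∈ closedBall (0 : E) ‖h‖, HasFDerivWithinAt (fun k => f (x + k) + f (x - k))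
      (fderiv ℝ f (x + k) - fderiv ℝ f (x - k)) (closedBall 0 ‖h‖) k := fun k _ => by
    have hsub := (hdf (x - k)).hasFDerivAt.comp k ((hasFDerivAt_id k).const_sub x)
    rw [ContinuousLinearMap.comp_neg, ContinuousLinearMap.comp_id] at hsub
    rw [sub_eq_add_neg]
    exact (((hasFDerivAt_comp_add_left x).2 (hdf (x + k)).hasFDerivAt).add hsub).hasFDerivWithinAt
  have hbound : ∀ k ∈ closedBall (0 : E) ‖h‖,
      ‖fderiv ℝ f (x + k) - fderiv ℝ f (x - k)‖ ≤ 2 * M * ‖h‖ := fun k hk => by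
    rw [mem_closedBall_zero_iff] at hk
    have hM0 : 0 ≤ M := (norm_nonneg (fderiv ℝ (fderiv ℝ f) x)).trans
      (hM x (mem_closedBall_self (norm_nonneg h)))
    calc ‖fderiv ℝ f (x + k) - fderiv ℝ f (x - k)‖ ≤ M * ‖(x + k) - (x - k)‖ :=
          (convex_closedBall x ‖h‖).norm_image_sub_le_of_norm_fderiv_le
            (fun z _ => hddf z) hM (by simpa using hk) (by simpa using hk)
      _ = M * ‖(2 : ℝ) • k‖ := by rw [two_smul]; congr 2; abel
      _ ≤ 2 * M * ‖h‖ := by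
          rw [norm_smul, Real.norm_two, ← mul_assoc, mul_comm M]
          gcongr
  have hmv := (convex_closedBall (0 : E) ‖h‖).norm_image_sub_le_of_norm_hasFDerivWithin_le hderiv
    hbound (mem_closedBall_self (norm_nonneg h)) (y := h) (by simp)
  calc ‖secondDiff f x h‖ = ‖(f (x + h) + f (x - h)) - (f (x + 0) + f (x - 0))‖ := by
        rw [← norm_neg, secondDiff, add_zero, sub_zero]
        congr 1
        abel
    _ ≤ 2 * M * ‖h‖ * ‖h - 0‖ := hmv
    _ = 2 * M * ‖h‖ ^ 2 := by rw [sub_zero]; ring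

lemma exists_forall_norm_secondDiff_le [ProperSpace E] {f : E → F} (hf : ContDiff ℝ 2 f)
    {S : Set E} (hS : IsCompact S) (r : ℝ) :
    ∃ M, ∀ x ∈ S, ∀ h, ‖h‖ ≤ r → ‖secondDiff f x h‖ ≤ M * ‖h‖ ^ 2 := by
  have hcont : Continuous fun z => ‖fderiv ℝ (fderiv ℝ f) z‖ :=
    ((hf.fderiv_right (m := 1) le_rfl).continuous_fderiv one_ne_zero).norm
  obtain ⟨M, hM⟩ := (hS.cthickening (r := r)).bddAbove_image hcont.continuousOn
  refine ⟨2 * M, fun x hx h hh => norm_secondDiff_le hf fun z hz => hM (mem_image_of_mem _ ?_)⟩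
  exact mem_cthickening_of_dist_le z x r S hx (hz.trans hh)

end SecondDifference

section Kernels

variable {E : Type*} [NormedAddCommGroup E]

/-- The part at infinity of the kernel `‖h‖ ^ (-α)`. It is capped at `1` inside the unit ball, so
that, unlike a sharp truncation, it is continuous. -/
noncomputable def tailKernel (α : ℝ) (h : E) : ℝ := max 1 ‖h‖ ^ (-α)

/-- The singular part of the kernel `‖h‖ ^ (-α)`, supported in the unit ball. -/
noncomputable def coreKernel (α : ℝ) (h : E) : ℝ := ‖h‖ ^ (-α) - tailKernel α h

lemma coreKernel_add_tailKernel (α : ℝ) (h : E) :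
    coreKernel α h + tailKernel α h = ‖h‖ ^ (-α) :=
  sub_add_cancel _ _

lemma tailKernel_nonneg (α : ℝ) (h : E) : 0 ≤ tailKernel α h := by
  unfold tailKernel
  positivity

lemma tailKernel_neg (α : ℝ) (h : E) : tailKernel α (-h) = tailKernel α h := by
  rw [tailKernel, tailKernel, norm_neg]

lemma tailKernel_of_norm_le_one (α : ℝ) {h : E} (hh : ‖h‖ ≤ 1) : tailKernel α h = 1 := by
  rw [tailKernel, max_eq_left hh, Real.one_rpow]

lemma tailKernel_of_one_le_norm (α : ℝ) {h : E} (hh : 1 ≤ ‖h‖) :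
    tailKernel α h = ‖h‖ ^ (-α) := by
  rw [tailKernel, max_eq_right hh]

lemma coreKernel_of_one_le_norm (α : ℝ) {h : E} (hh : 1 ≤ ‖h‖) : coreKernel α h = 0 := by
  rw [coreKernel, tailKernel_of_one_le_norm α hh, sub_self]

lemma continuous_tailKernel (α : ℝ) : Continuous (tailKernel α : E → ℝ) :=
  (continuous_const.max continuous_norm).rpow_const fun h =>
    Or.inl (zero_lt_one.trans_le (le_max_left 1 ‖h‖)).ne'

lemma measurable_coreKernel [MeasurableSpace E] [BorelSpace E] (α : ℝ) :
    Measurable (coreKernel α : E → ℝ) :=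
  (measurable_norm.pow_const _).sub (continuous_tailKernel α).measurable

lemma tailKernel_sub_le {α : ℝ} (hα : 0 ≤ α) (x y : E) :
    tailKernel α (x - y) ≤ (1 + ‖x‖) ^ α * tailKernel α y := by
  refine rpow_neg_le_rpow_mul_rpow_neg (by positivity) (by positivity) hα (max_le ?_ ?_)
  · nlinarith [norm_nonneg x, le_max_left 1 ‖x - y‖]
  · calc ‖y‖ ≤ ‖x‖ + ‖x - y‖ := by simpa using norm_sub_le x (x - y)
      _ ≤ (1 + ‖x‖) * max 1 ‖x - y‖ := by
        nlinarith [norm_nonneg x, le_max_left 1 ‖x - y‖, le_max_right 1 ‖x - y‖]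

lemma norm_rpow_neg_le_tailKernel {α ε : ℝ} (hα : 0 ≤ α) (hε : 0 < ε) {h : E} (hh : ε ≤ ‖h‖) :
    ‖h‖ ^ (-α) ≤ (1 + ε⁻¹) ^ α * tailKernel α h := by
  have hone : 1 ≤ ε⁻¹ * ‖h‖ := by rwa [inv_mul_eq_div, one_le_div hε]
  refine rpow_neg_le_rpow_mul_rpow_neg (by positivity) (by positivity) hα (max_le ?_ ?_)
  · linarith [norm_nonneg h]
  · linarith

lemma norm_sq_mul_abs_coreKernel_le {α : ℝ} (hα : 0 ≤ α) (h : E) :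
    ‖h‖ ^ 2 * |coreKernel α h| ≤ ‖h‖ ^ (2 - α) := by
  rcases eq_or_ne h 0 with rfl | hne
  · rw [norm_zero, zero_pow two_ne_zero, zero_mul]
    positivity
  have hpos : 0 < ‖h‖ := norm_pos_iff.2 hne
  have htail : tailKernel α h ≤ ‖h‖ ^ (-α) :=
    Real.rpow_le_rpow_of_nonpos hpos (le_max_right _ _) (neg_nonpos.2 hα)
  calc ‖h‖ ^ 2 * |coreKernel α h| ≤ ‖h‖ ^ 2 * ‖h‖ ^ (-α) := by
        rw [coreKernel, abs_of_nonneg (sub_nonneg.2 htail)]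
        gcongr
        exact sub_le_self _ (tailKernel_nonneg α h)
    _ = ‖h‖ ^ (2 - α) := by
        rw [← Real.rpow_natCast, ← Real.rpow_add hpos, Nat.cast_ofNat, sub_eq_add_neg]

lemma secondDiff_mul_tailKernel_eq_add (α : ℝ) (f : E → ℝ) (x h : E) :
    secondDiff f x h * tailKernel α h =
      (f x - f (x - h)) * tailKernel α h + (f x - f (x - -h)) * tailKernel α (-h) := by
  rw [secondDiff, tailKernel_neg, sub_neg_eq_add]
  ring

lemma norm_secondDiff_mul_coreKernel_le {α M : ℝ} {f : E → ℝ} {S : Set E}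
    (hM : ∀ x ∈ S, ∀ h, ‖h‖ ≤ 1 → ‖secondDiff f x h‖ ≤ M * ‖h‖ ^ 2) {x : E} (hx : x ∈ S) (h : E) :
    ‖secondDiff f x h * coreKernel α h‖ ≤ M * (‖h‖ ^ 2 * |coreKernel α h|) := by
  rcases le_or_gt ‖h‖ 1 with hh | hh
  · rw [norm_mul, ← mul_assoc, Real.norm_eq_abs (coreKernel α h)]
    gcongr
    exact hM x hx h hh
  · simp [coreKernel_of_one_le_norm α hh.le]

lemma measurable_secondDiff_mul_coreKernel [MeasurableSpace E] [BorelSpace E] {f : E → ℝ} (α : ℝ)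
    (hf : Continuous f) (x : E) :
    Measurable fun h => secondDiff f x h * coreKernel α h :=
  ((continuous_secondDiff hf).comp (.prodMk_right x)).measurable.mul (measurable_coreKernel α)

variable [NormedSpace ℝ E] [FiniteDimensional ℝ E] [MeasurableSpace E] [BorelSpace E]
  (μ : Measure E) [μ.IsAddHaarMeasure]

lemma integrable_tailKernel {α : ℝ} (hα : finrank ℝ E < α) :
    Integrable (tailKernel α : E → ℝ) μ := by
  have hα0 : 0 ≤ α := (Nat.cast_nonneg _).trans hα.le
  refine ((integrable_one_add_norm (μ := μ) hα).const_mul ((2 : ℝ) ^ α)).mono'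
    (continuous_tailKernel α).aestronglyMeasurable (Eventually.of_forall fun h => ?_)
  rw [Real.norm_of_nonneg (tailKernel_nonneg α h)]
  refine rpow_neg_le_rpow_mul_rpow_neg (by positivity) two_pos hα0 ?_
  linarith [le_max_left 1 ‖h‖, le_max_right 1 ‖h‖]

lemma integrable_norm_sq_mul_abs_coreKernel [Nontrivial E] {α : ℝ} (hα0 : 0 ≤ α)
    (hα : α < finrank ℝ E + 2) : Integrable (fun h : E => ‖h‖ ^ 2 * |coreKernel α h|) μ := by
  have hball : IntegrableOn (fun h : E => ‖h‖ ^ 2 * |coreKernel α h|) (ball 0 1) μ := by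
    refine integrableOn_ball_of_norm_le_rpow (C := 1) (α := α - 2) finrank_pos (by linarith)
      (Eventually.of_forall fun h => ?_)
      ((measurable_norm.pow_const 2).mul (measurable_coreKernel α).abs).aestronglyMeasurable
    rw [Real.norm_of_nonneg (by positivity), one_mul, neg_sub]
    exact norm_sq_mul_abs_coreKernel_le hα0 h
  refine (integrableOn_iff_integrable_of_support_subset fun h hh => ?_).1 hball
  rw [mem_ball_zero_iff]
  contrapose! hh
  simp [coreKernel_of_one_le_norm α hh]

end Kernels

section TailIntegrability

variable {E : Type*} [NormedAddCommGroup E] [MeasurableSpace E] [BorelSpace E] {μ : Measure E}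
  {f : E → ℝ} {α : ℝ}

lemma integrable_mul_tailKernel [ProperSpace E] (hf : LocallyIntegrable f μ)
    (hfi : IntegrableOn (fun y => f y * ‖y‖ ^ (-α)) {y | 1 < ‖y‖} μ) :
    Integrable (fun y => f y * tailKernel α y) μ := by
  have hball : IntegrableOn (fun y => f y * tailKernel α y) (closedBall 0 1) μ := by
    refine (hf.integrableOn_isCompact (isCompact_closedBall 0 1)).congr_fun (fun y hy => ?_)
      measurableSet_closedBall
    simp only [tailKernel_of_norm_le_one α (mem_closedBall_zero_iff.1 hy), mul_one]
  have hext : IntegrableOn (fun y => f y * tailKernel α y) {y | 1 < ‖y‖} μ :=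
    hfi.congr_fun (fun y hy => by simp only [tailKernel_of_one_le_norm α (le_of_lt hy)])
      (measurableSet_lt measurable_const measurable_norm)
  rw [← integrableOn_univ]
  refine (hball.union hext).mono_set fun y _ => ?_
  exact (le_or_gt ‖y‖ 1).imp mem_closedBall_zero_iff.2 id

lemma integrable_mul_tailKernel_sub (hα : 0 ≤ α) (hf : AEStronglyMeasurable f μ)
    (hfi : Integrable (fun y => f y * tailKernel α y) μ) (x : E) :
    Integrable (fun y => f y * tailKernel α (x - y)) μ := by
  refine (hfi.norm.const_mul ((1 + ‖x‖) ^ α)).mono'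
    (hf.mul ((continuous_tailKernel α).comp (by fun_prop)).aestronglyMeasurable)
    (Eventually.of_forall fun y => ?_)
  rw [norm_mul, norm_mul, Real.norm_of_nonneg (tailKernel_nonneg _ _),
    Real.norm_of_nonneg (tailKernel_nonneg _ _), mul_left_comm]
  gcongr
  exact tailKernel_sub_le hα x y

lemma continuous_integral_mul_tailKernel_sub (hα : 0 ≤ α) (hf : AEStronglyMeasurable f μ)
    (hfi : Integrable (fun y => f y * tailKernel α y) μ) :
    Continuous fun x => ∫ y, f y * tailKernel α (x - y) ∂μ := by
  refine continuous_iff_continuousAt.2 fun x₀ => continuousAt_of_dominated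
    (bound := fun y => (1 + (‖x₀‖ + 1)) ^ α * ‖f y * tailKernel α y‖)
    (Eventually.of_forall fun x => (integrable_mul_tailKernel_sub hα hf hfi x).1) ?_
    (hfi.norm.const_mul _) (Eventually.of_forall fun y => ?_)
  · filter_upwards [closedBall_mem_nhds x₀ one_pos] with x hx
    refine Eventually.of_forall fun y => ?_
    rw [norm_mul, norm_mul, Real.norm_of_nonneg (tailKernel_nonneg _ _),
      Real.norm_of_nonneg (tailKernel_nonneg _ _), mul_left_comm]
    gcongr
    refine (tailKernel_sub_le hα x y).trans ?_
    gcongr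
    · exact tailKernel_nonneg α y
    · exact norm_le_of_mem_closedBall hx
  · have := continuous_tailKernel (E := E) α
    fun_prop

lemma integrable_prod_mul_mul_tailKernel [SecondCountableTopology E] [SFinite μ] {v φ : E → ℝ}
    (hα : 0 ≤ α) (hv : AEStronglyMeasurable v μ)
    (hvi : Integrable (fun y => v y * tailKernel α y) μ) (hφ : AEStronglyMeasurable φ μ)
    (hφi : Integrable (fun x => φ x * (1 + ‖x‖) ^ α) μ) :
    Integrable (fun z : E × E => φ z.1 * v z.2 * tailKernel α (z.1 - z.2)) (μ.prod μ) := by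
  refine (hφi.norm.mul_prod hvi.norm).mono' ((hφ.comp_fst.mul hv.comp_snd).mul
    ((continuous_tailKernel α).comp (by fun_prop)).aestronglyMeasurable)
    (Eventually.of_forall fun z => ?_)
  calc ‖φ z.1 * v z.2 * tailKernel α (z.1 - z.2)‖
      = ‖φ z.1‖ * ‖v z.2‖ * tailKernel α (z.1 - z.2) := by
        rw [norm_mul, norm_mul, Real.norm_of_nonneg (tailKernel_nonneg _ _)]
    _ ≤ ‖φ z.1‖ * ‖v z.2‖ * ((1 + ‖z.1‖) ^ α * tailKernel α z.2) := by
        gcongr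
        exact tailKernel_sub_le hα z.1 z.2
    _ = ‖φ z.1 * (1 + ‖z.1‖) ^ α‖ * ‖v z.2 * tailKernel α z.2‖ := by
        rw [norm_mul, norm_mul, Real.norm_of_nonneg (tailKernel_nonneg _ _),
          Real.norm_of_nonneg (by positivity : 0 ≤ (1 + ‖z.1‖) ^ α)]
        ring

variable [NormedSpace ℝ E] [FiniteDimensional ℝ E] [μ.IsAddHaarMeasure]

lemma integrableOn_mul_norm_rpow_neg_of_rpow_weight {p Λ : ℝ} (hp : 1 < p)
    (hΛ : finrank ℝ E * (p - 1) < Λ + p * α) (hf : AEStronglyMeasurable f μ)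
    (hfi : IntegrableOn (fun y => |f y| ^ p * ‖y‖ ^ Λ) {y | 1 < ‖y‖} μ) :
    IntegrableOn (fun y => f y * ‖y‖ ^ (-α)) {y | 1 < ‖y‖} μ := by
  have hext : MeasurableSet {y : E | 1 < ‖y‖} := measurableSet_lt measurable_const measurable_norm
  set β := (Λ + p * α) / (p - 1)
  have hβ : finrank ℝ E < β := (lt_div_iff₀ (sub_pos.2 hp)).2 hΛ
  refine ((hfi.div_const p).add
    ((integrable_tailKernel μ hβ).div_const p.conjExponent).integrableOn).mono'
    (hf.mul (measurable_norm.pow_const _).aestronglyMeasurable).restrict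
    ((ae_restrict_iff' hext).2 (Eventually.of_forall fun y hy => ?_))
  rw [norm_mul, Real.norm_eq_abs, Real.norm_of_nonneg (by positivity), Pi.add_apply,
    tailKernel_of_one_le_norm β (le_of_lt hy)]
  exact mul_rpow_neg_le_young hp Λ α (abs_nonneg _) (zero_lt_one.trans hy)

lemma integrable_sub_mul_tailKernel (hα : finrank ℝ E < α) (hf : AEStronglyMeasurable f μ)
    (hfi : Integrable (fun y => f y * tailKernel α y) μ) (x : E) :
    Integrable (fun h => (f x - f (x - h)) * tailKernel α h) μ := by
  have hα0 : 0 ≤ α := (Nat.cast_nonneg _).trans hα.le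
  have htrans := (integrable_mul_tailKernel_sub hα0 hf hfi x).comp_sub_left x
  simp only [sub_sub_cancel] at htrans
  simp only [sub_mul]
  exact ((integrable_tailKernel μ hα).const_mul (f x)).sub htrans

end TailIntegrability

section SymmetrizedIntegral

/-- The singular integral `∫ (2 f(x) - f(x + h) - f(x - h)) ‖h‖ ^ (-α) dh`. For `α = d + 2 s` it is
`2 (-Δ)^s f(x) / C_{d,s}`, written so that it converges absolutely when `f` is `C²`. -/
noncomputable def symmSingularIntegral {E : Type*} [NormedAddCommGroup E] [MeasurableSpace E]
    (μ : Measure E) (α : ℝ) (f : E → ℝ) (x : E) : ℝ :=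
  ∫ h, secondDiff f x h * ‖h‖ ^ (-α) ∂μ

variable {E : Type*} [NormedAddCommGroup E] [NormedSpace ℝ E] [FiniteDimensional ℝ E]
  [MeasurableSpace E] [BorelSpace E] {μ : Measure E} [μ.IsAddHaarMeasure] {f : E → ℝ} {α : ℝ}

lemma integrable_secondDiff_mul_tailKernel (hα : finrank ℝ E < α) (hf : AEStronglyMeasurable f μ)
    (hfi : Integrable (fun y => f y * tailKernel α y) μ) (x : E) :
    Integrable (fun h => secondDiff f x h * tailKernel α h) μ := by
  have hdiff := integrable_sub_mul_tailKernel hα hf hfi x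
  simp only [secondDiff_mul_tailKernel_eq_add]
  exact hdiff.add hdiff.comp_neg

lemma integral_secondDiff_mul_tailKernel (hα : finrank ℝ E < α) (hf : AEStronglyMeasurable f μ)
    (hfi : Integrable (fun y => f y * tailKernel α y) μ) (x : E) :
    ∫ h, secondDiff f x h * tailKernel α h ∂μ =
      2 * (f x * ∫ h, tailKernel α h ∂μ - ∫ y, f y * tailKernel α (x - y) ∂μ) := by
  have hα0 : 0 ≤ α := (Nat.cast_nonneg _).trans hα.le
  have hdiff := integrable_sub_mul_tailKernel hα hf hfi x
  simp only [secondDiff_mul_tailKernel_eq_add]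
  rw [integral_add hdiff hdiff.comp_neg,
    integral_neg_eq_self (fun h => (f x - f (x - h)) * tailKernel α h), ← two_mul]
  congr 1
  rw [← integral_sub_left_eq_self _ μ x, ← integral_sub_left_eq_self (tailKernel α) μ x,
    ← integral_const_mul, ← integral_sub
      (((integrable_tailKernel μ hα).comp_sub_left x).const_mul (f x))
      (integrable_mul_tailKernel_sub hα0 hf hfi x)]
  simp only [sub_sub_cancel, sub_mul]

lemma integrable_secondDiff_mul_coreKernel [Nontrivial E] (hα0 : 0 ≤ α)
    (hα : α < finrank ℝ E + 2) (hf : ContDiff ℝ 2 f) (x : E) :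
    Integrable (fun h => secondDiff f x h * coreKernel α h) μ := by
  obtain ⟨M, hM⟩ := exists_forall_norm_secondDiff_le hf (isCompact_singleton (x := x)) 1
  exact ((integrable_norm_sq_mul_abs_coreKernel μ hα0 hα).const_mul M).mono'
    (measurable_secondDiff_mul_coreKernel α hf.continuous x).aestronglyMeasurable
    (Eventually.of_forall (norm_secondDiff_mul_coreKernel_le hM rfl))

lemma continuous_integral_secondDiff_mul_coreKernel [Nontrivial E] (hα0 : 0 ≤ α)
    (hα : α < finrank ℝ E + 2) (hf : ContDiff ℝ 2 f) :
    Continuous fun x => ∫ h, secondDiff f x h * coreKernel α h ∂μ := by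
  refine continuous_iff_continuousAt.2 fun x₀ => ?_
  obtain ⟨M, hM⟩ := exists_forall_norm_secondDiff_le hf (isCompact_closedBall x₀ 1) 1
  refine continuousAt_of_dominated
    (Eventually.of_forall fun x =>
      (measurable_secondDiff_mul_coreKernel α hf.continuous x).aestronglyMeasurable) ?_
    ((integrable_norm_sq_mul_abs_coreKernel μ hα0 hα).const_mul M)
    (Eventually.of_forall fun h => ?_)
  · filter_upwards [closedBall_mem_nhds x₀ one_pos] with x hx
    exact Eventually.of_forall (norm_secondDiff_mul_coreKernel_le hM hx)
  · exact (((continuous_secondDiff hf.continuous).comp (.prodMk_left h)).mul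
      continuous_const).continuousAt

lemma integrable_secondDiff_mul_norm_rpow [Nontrivial E] (hα : finrank ℝ E < α)
    (hα2 : α < finrank ℝ E + 2) (hf : ContDiff ℝ 2 f)
    (hfi : Integrable (fun y => f y * tailKernel α y) μ) (x : E) :
    Integrable (fun h => secondDiff f x h * ‖h‖ ^ (-α)) μ := by
  have hα0 : 0 ≤ α := (Nat.cast_nonneg _).trans hα.le
  simp only [← coreKernel_add_tailKernel, mul_add]
  exact (integrable_secondDiff_mul_coreKernel hα0 hα2 hf x).add
    (integrable_secondDiff_mul_tailKernel hα hf.continuous.aestronglyMeasurable hfi x)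

theorem continuous_symmSingularIntegral [Nontrivial E] (hα : finrank ℝ E < α)
    (hα2 : α < finrank ℝ E + 2) (hf : ContDiff ℝ 2 f)
    (hfi : Integrable (fun y => f y * tailKernel α y) μ) :
    Continuous (symmSingularIntegral μ α f) := by
  have hα0 : 0 ≤ α := (Nat.cast_nonneg _).trans hα.le
  have hmeas : AEStronglyMeasurable f μ := hf.continuous.aestronglyMeasurable
  have hsplit : symmSingularIntegral μ α f = fun x =>
      ∫ h, secondDiff f x h * coreKernel α h ∂μ +
        2 * (f x * ∫ h, tailKernel α h ∂μ - ∫ y, f y * tailKernel α (x - y) ∂μ) := by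
    ext x
    rw [← integral_secondDiff_mul_tailKernel hα hmeas hfi, ← integral_add
      (integrable_secondDiff_mul_coreKernel hα0 hα2 hf x)
      (integrable_secondDiff_mul_tailKernel hα hmeas hfi x)]
    simp only [← mul_add, coreKernel_add_tailKernel, symmSingularIntegral]
  rw [hsplit]
  exact (continuous_integral_secondDiff_mul_coreKernel hα0 hα2 hf).add (continuous_const.mul
    ((hf.continuous.mul continuous_const).sub
      (continuous_integral_mul_tailKernel_sub hα0 hmeas hfi)))

end SymmetrizedIntegral

section Duality

variable {E : Type*} [NormedAddCommGroup E] [MeasurableSpace E] [BorelSpace E] {μ : Measure E}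
  [μ.IsAddHaarMeasure] {u f v φ : E → ℝ} {α : ℝ}

lemma integral_mul_secondDiff (hv : Continuous v) (hφ : Continuous φ)
    (hφs : HasCompactSupport φ) (h : E) :
    ∫ x, v x * secondDiff φ x h ∂μ = ∫ x, secondDiff v x h * φ x ∂μ := by
  have hint : ∀ k l : E, Integrable (fun x => v (x + k) * φ (x + l)) μ := fun k l =>
    Continuous.integrable_of_hasCompactSupport (by fun_prop)
      (hφs.comp_homeomorph (Homeomorph.addRight l)).mul_left
  have hshift : ∀ k : E, ∫ x, v x * φ (x + k) ∂μ = ∫ x, v (x - k) * φ x ∂μ := fun k => by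
    rw [← integral_sub_right_eq_self _ k]
    simp only [sub_add_cancel]
  have hv0 := hint 0 0
  have hvp := hint h 0
  have hvn := hint (-h) 0
  have hφp := hint 0 h
  have hφn := hint 0 (-h)
  simp only [add_zero, ← sub_eq_add_neg] at hv0 hvp hvn hφp hφn
  have hsplit : ∀ {k l : E → ℝ}, Integrable k μ → Integrable l μ →
      ∫ x, ((v x * φ x - k x) + (v x * φ x - l x)) ∂μ =
        (∫ x, v x * φ x ∂μ - ∫ x, k x ∂μ) + (∫ x, v x * φ x ∂μ - ∫ x, l x ∂μ) := fun hk hl => by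
    rw [← integral_sub hv0 hk, ← integral_sub hv0 hl]
    exact integral_add (hv0.sub hk) (hv0.sub hl)
  have hshift_neg := hshift (-h)
  simp only [sub_neg_eq_add, ← sub_eq_add_neg] at hshift_neg
  simp only [secondDiff, mul_add, mul_sub, add_mul, sub_mul]
  rw [hsplit hφp hφn, hsplit hvp hvn, hshift, hshift_neg, add_comm]

variable [NormedSpace ℝ E] [FiniteDimensional ℝ E]

lemma integral_mul_symmSingularIntegral_of_integrable_prod (hv : Continuous v) (hφ : Continuous φ)
    (hφs : HasCompactSupport φ)
    (hleft : Integrable (fun z : E × E => v z.1 * (secondDiff φ z.1 z.2 * ‖z.2‖ ^ (-α)))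
      (μ.prod μ))
    (hright : Integrable (fun z : E × E => φ z.1 * (secondDiff v z.1 z.2 * ‖z.2‖ ^ (-α)))
      (μ.prod μ)) :
    ∫ x, v x * symmSingularIntegral μ α φ x ∂μ = ∫ x, symmSingularIntegral μ α v x * φ x ∂μ := by
  have hslice : ∀ h : E, ∫ x, v x * (secondDiff φ x h * ‖h‖ ^ (-α)) ∂μ =
      ∫ x, φ x * (secondDiff v x h * ‖h‖ ^ (-α)) ∂μ := fun h => by
    simp only [← mul_assoc, integral_mul_const]
    rw [integral_mul_secondDiff hv hφ hφs]
    simp only [mul_comm]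
  simp only [mul_comm _ (φ _), symmSingularIntegral, ← integral_const_mul]
  rw [integral_integral_swap hleft]
  simp only [hslice]
  exact (integral_integral_swap hright).symm

lemma integrable_prod_mul_secondDiff_mul_coreKernel [Nontrivial E] (hα0 : 0 ≤ α)
    (hα : α < finrank ℝ E + 2) (hu : Continuous u) (hf : ContDiff ℝ 2 f) {S : Set E}
    (hS : IsCompact S) (hzero : ∀ x ∉ S, ∀ h, ‖h‖ ≤ 1 → u x * secondDiff f x h = 0) :
    Integrable (fun z : E × E => u z.1 * (secondDiff f z.1 z.2 * coreKernel α z.2))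
      (μ.prod μ) := by
  obtain ⟨M, hM⟩ := exists_forall_norm_secondDiff_le hf hS 1
  have huS : Integrable (S.indicator fun x => ‖u x‖) μ :=
    (hu.norm.continuousOn.integrableOn_compact hS).integrable_indicator hS.measurableSet
  refine (huS.mul_prod ((integrable_norm_sq_mul_abs_coreKernel μ hα0 hα).const_mul M)).mono'
    ?_ (Eventually.of_forall fun z => ?_)
  · exact ((hu.measurable.comp measurable_fst).mul
      ((continuous_secondDiff hf.continuous).measurable.mul
        ((measurable_coreKernel α).comp measurable_snd))).aestronglyMeasurable
  by_cases hx : z.1 ∈ S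
  · rw [indicator_of_mem hx, norm_mul]
    gcongr
    exact norm_secondDiff_mul_coreKernel_le hM hx z.2
  · rw [indicator_of_notMem hx, zero_mul, ← mul_assoc]
    rcases le_or_gt ‖z.2‖ 1 with hh | hh
    · simp [hzero z.1 hx z.2 hh]
    · simp [coreKernel_of_one_le_norm α hh.le]

lemma integrable_prod_mul_secondDiff_mul_tailKernel (hα : finrank ℝ E < α)
    (huf : Integrable (fun x => u x * f x) μ)
    (hpair : Integrable (fun z : E × E => u z.1 * f z.2 * tailKernel α (z.2 - z.1)) (μ.prod μ)) :
    Integrable (fun z : E × E => u z.1 * (secondDiff f z.1 z.2 * tailKernel α z.2))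
      (μ.prod μ) := by
  have hdiag := huf.mul_prod (integrable_tailKernel μ hα)
  have hadd := (measurePreserving_prod_add μ μ).integrable_comp_of_integrable hpair
  have hsub := ((MeasurePreserving.id μ).prod
    (Measure.measurePreserving_neg μ)).integrable_comp_of_integrable hadd
  refine ((hdiag.sub hadd).add (hdiag.sub hsub)).congr (Eventually.of_forall fun z => ?_)
  simp only [secondDiff, Pi.add_apply, Pi.sub_apply, Function.comp_apply, Prod.map_fst,
    Prod.map_snd, id_eq, add_sub_cancel_left, tailKernel_neg]
  simp only [← sub_eq_add_neg]
  ring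

theorem integral_mul_symmSingularIntegral [Nontrivial E] (hα : finrank ℝ E < α)
    (hα2 : α < finrank ℝ E + 2) (hv : ContDiff ℝ 2 v)
    (hvi : Integrable (fun y => v y * tailKernel α y) μ) (hφ : ContDiff ℝ 2 φ)
    (hφs : HasCompactSupport φ) :
    ∫ x, v x * symmSingularIntegral μ α φ x ∂μ = ∫ x, symmSingularIntegral μ α v x * φ x ∂μ := by
  have hα0 : 0 ≤ α := (Nat.cast_nonneg _).trans hα.le
  have hvφ : Integrable (fun x => v x * φ x) μ :=
    (hv.continuous.mul hφ.continuous).integrable_of_hasCompactSupport hφs.mul_left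
  have hφi : Integrable (fun x => φ x * (1 + ‖x‖) ^ α) μ :=
    (hφ.continuous.mul (Continuous.rpow_const (by fun_prop)
      fun _ => Or.inr hα0)).integrable_of_hasCompactSupport hφs.mul_right
  have hpair := integrable_prod_mul_mul_tailKernel hα0 hv.continuous.aestronglyMeasurable hvi
    hφ.continuous.aestronglyMeasurable hφi
  have hφ_zero : ∀ x ∉ tsupport φ, ∀ h, ‖h‖ ≤ 1 → φ x * secondDiff v x h = 0 := fun x hx _ _ => by
    rw [image_eq_zero_of_notMem_tsupport hx, zero_mul]
  have hdiff_zero : ∀ x ∉ cthickening 1 (tsupport φ), ∀ h, ‖h‖ ≤ 1 →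
      v x * secondDiff φ x h = 0 := fun x hx h hh => by
    have hnear : ∀ y, dist x y ≤ 1 → φ y = 0 := fun y hy =>
      image_eq_zero_of_notMem_tsupport fun hy' => hx (mem_cthickening_of_dist_le x y 1 _ hy' hy)
    simp [secondDiff, hnear x (by simp), hnear (x + h) (by simpa), hnear (x - h) (by simpa)]
  refine integral_mul_symmSingularIntegral_of_integrable_prod hv.continuous hφ.continuous hφs ?_ ?_
  · simp only [← coreKernel_add_tailKernel, mul_add]
    refine (integrable_prod_mul_secondDiff_mul_coreKernel hα0 hα2 hv.continuous hφ
      hφs.isCompact.cthickening hdiff_zero).add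
      (integrable_prod_mul_secondDiff_mul_tailKernel hα hvφ ?_)
    simpa only [Function.comp_def, Prod.fst_swap, Prod.snd_swap, mul_comm (φ _)] using hpair.swap
  · simp only [← coreKernel_add_tailKernel, mul_add]
    refine (integrable_prod_mul_secondDiff_mul_coreKernel hα0 hα2 hφ.continuous hv hφs.isCompact
      hφ_zero).add (integrable_prod_mul_secondDiff_mul_tailKernel hα ?_ ?_)
    · simpa only [mul_comm (φ _)] using hvφ
    · exact hpair.congr (Eventually.of_forall fun z => by
        simp only [← tailKernel_neg α (z.1 - z.2), neg_sub])

end Duality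

section PrincipalValue

variable {E : Type*} [NormedAddCommGroup E] [NormedSpace ℝ E] [FiniteDimensional ℝ E]
  [MeasurableSpace E] [BorelSpace E] {μ : Measure E} [μ.IsAddHaarMeasure] {f : E → ℝ} {α ε : ℝ}

lemma integrableOn_sub_mul_norm_rpow (hα : finrank ℝ E < α) (hε : 0 < ε)
    (hf : AEStronglyMeasurable f μ) (hfi : Integrable (fun y => f y * tailKernel α y) μ) (x : E) :
    IntegrableOn (fun h => (f x - f (x - h)) * ‖h‖ ^ (-α)) {h | ε ≤ ‖h‖} μ := by
  have hα0 : 0 ≤ α := (Nat.cast_nonneg _).trans hα.le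
  have hmeas : AEStronglyMeasurable (fun h => f (x - h)) μ :=
    hf.comp_quasiMeasurePreserving (quasiMeasurePreserving_sub_left μ x)
  refine ((integrable_sub_mul_tailKernel hα hf hfi x).norm.const_mul
    ((1 + ε⁻¹) ^ α)).integrableOn.mono'
    ((aestronglyMeasurable_const.sub hmeas).mul
      (measurable_norm.pow_const _).aestronglyMeasurable).restrict
    ((ae_restrict_iff' (measurableSet_le measurable_const measurable_norm)).2
      (Eventually.of_forall fun h hh => ?_))
  rw [norm_mul, norm_mul, Real.norm_of_nonneg (tailKernel_nonneg _ _), mul_left_comm,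
    Real.norm_of_nonneg (by positivity : 0 ≤ ‖h‖ ^ (-α))]
  gcongr
  exact norm_rpow_neg_le_tailKernel hα0 hε hh

lemma setIntegral_sub_div_dist_rpow (hα : finrank ℝ E < α) (hε : 0 < ε)
    (hf : AEStronglyMeasurable f μ) (hfi : Integrable (fun y => f y * tailKernel α y) μ) (x : E) :
    ∫ y in {y | ε ≤ dist x y}, (f x - f y) / dist x y ^ α ∂μ =
      2⁻¹ * ∫ h in {h | ε ≤ ‖h‖}, secondDiff f x h * ‖h‖ ^ (-α) ∂μ := by
  have hfar : MeasurableSet {h : E | ε ≤ ‖h‖} := measurableSet_le measurable_const measurable_norm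
  set g := {h : E | ε ≤ ‖h‖}.indicator fun h => (f x - f (x - h)) * ‖h‖ ^ (-α) with hg
  have hgi : Integrable g μ :=
    (integrableOn_sub_mul_norm_rpow hα hε hf hfi x).integrable_indicator hfar
  have hleft : ∫ y in {y | ε ≤ dist x y}, (f x - f y) / dist x y ^ α ∂μ = ∫ h, g h ∂μ := by
    rw [← integral_indicator (measurableSet_le measurable_const (by fun_prop)),
      ← integral_sub_left_eq_self g μ x]
    simp only [hg, indicator, mem_ofPred_eq, dist_eq_norm, sub_sub_cancel, div_eq_mul_inv,
      Real.rpow_neg (norm_nonneg _)]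
  have hright : ∫ h in {h | ε ≤ ‖h‖}, secondDiff f x h * ‖h‖ ^ (-α) ∂μ =
      ∫ h, (g h + g (-h)) ∂μ := by
    rw [← integral_indicator hfar]
    congr 1 with h
    simp only [hg, indicator, mem_ofPred_eq, norm_neg, sub_neg_eq_add, secondDiff]
    split_ifs <;> ring
  rw [hleft, hright, integral_add hgi hgi.comp_neg, integral_neg_eq_self, ← two_mul,
    inv_mul_cancel_left₀ two_ne_zero]

lemma aecover_le_norm [Nontrivial E] : AECover μ (𝓝[>] (0 : ℝ)) fun ε => {h : E | ε ≤ ‖h‖} where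
  ae_eventually_mem := by
    filter_upwards [Measure.ae_ne μ (0 : E)] with h hh
    filter_upwards [Ioc_mem_nhdsGT (norm_pos_iff.2 hh)] with ε hε using hε.2
  measurableSet _ := measurableSet_le measurable_const measurable_norm

theorem tendsto_setIntegral_sub_div_dist_rpow [Nontrivial E] (hα : finrank ℝ E < α)
    (hα2 : α < finrank ℝ E + 2) (hf : ContDiff ℝ 2 f)
    (hfi : Integrable (fun y => f y * tailKernel α y) μ) (x : E) :
    Tendsto (fun ε : ℝ => ∫ y in {y | ε ≤ dist x y}, (f x - f y) / dist x y ^ α ∂μ) (𝓝[>] 0)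
      (𝓝 (2⁻¹ * symmSingularIntegral μ α f x)) := by
  refine ((aecover_le_norm.integral_tendsto_of_countably_generated
    (integrable_secondDiff_mul_norm_rpow hα hα2 hf hfi x)).const_mul 2⁻¹).congr' ?_
  filter_upwards [self_mem_nhdsWithin] with ε hε
  exact (setIntegral_sub_div_dist_rpow hα hε hf.continuous.aestronglyMeasurable hfi x).symm

end PrincipalValue

section FractionalLaplacian

variable {d : ℕ} {s : ℝ} {f : Ed d → ℝ}

lemma add_two_mul_mem_Ioo_finrank (d : ℕ) (hs : s ∈ Ioo (0 : ℝ) 1) :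
    (d : ℝ) + 2 * s ∈ Ioo (finrank ℝ (Ed d) : ℝ) (finrank ℝ (Ed d) + 2) := by
  rw [finrank_euclideanSpace_fin]
  constructor <;> linarith [hs.1, hs.2]

theorem fracLap_eq_symmSingularIntegral [NeZero d] (hs : s ∈ Ioo (0 : ℝ) 1) (Cds : ℝ)
    (hf : ContDiff ℝ 2 f) (hfi : Integrable fun y => f y * tailKernel (d + 2 * s) y) :
    fracLap d s Cds f = fun x => Cds / 2 * symmSingularIntegral volume (d + 2 * s) f x := by
  obtain ⟨hα, hα2⟩ := add_two_mul_mem_Ioo_finrank d hs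
  ext x
  have hlim : Tendsto (fracLapTrunc d s f x) (𝓝[>] 0)
      (𝓝 (2⁻¹ * symmSingularIntegral volume (d + 2 * s) f x)) :=
    tendsto_setIntegral_sub_div_dist_rpow hα hα2 hf hfi x
  rw [fracLap, hlim.limUnder_eq, ← mul_assoc, ← div_eq_mul_inv]

end FractionalLaplacian

theorem stmt9_general {d : ℕ} (hd : 1 ≤ d) {s : ℝ} (hs : s ∈ Ioo (0 : ℝ) 1) (Cds : ℝ)
    {v : Ed d → ℝ} (hv : ContDiff ℝ 2 v)
    (hvi : IntegrableOn (fun y => v y * ‖y‖ ^ (-((d : ℝ) + 2 * s))) {y | 1 < ‖y‖}) :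
    Continuous (fracLap d s Cds v) ∧
    ∀ φ : Ed d → ℝ, ContDiff ℝ 2 φ → HasCompactSupport φ →
      ∫ x, v x * fracLap d s Cds φ x = ∫ x, fracLap d s Cds v x * φ x := by
  have : NeZero d := ⟨Nat.one_le_iff_ne_zero.1 hd⟩
  obtain ⟨hα, hα2⟩ := add_two_mul_mem_Ioo_finrank d hs
  have hvt := integrable_mul_tailKernel hv.continuous.locallyIntegrable hvi
  rw [fracLap_eq_symmSingularIntegral hs Cds hv hvt]
  refine ⟨continuous_const.mul (continuous_symmSingularIntegral hα hα2 hv hvt), fun φ hφ hφs => ?_⟩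
  have hφt : Integrable fun y => φ y * tailKernel (d + 2 * s) y :=
    (hφ.continuous.mul (continuous_tailKernel _)).integrable_of_hasCompactSupport hφs.mul_right
  rw [fracLap_eq_symmSingularIntegral hs Cds hφ hφt]
  simp only [mul_left_comm (v _), mul_assoc, integral_const_mul,
    integral_mul_symmSingularIntegral hα hα2 hv hvt hφ hφs]

theorem stmt9 (d : ℕ) (hd : 1 ≤ d) (s : ℝ) (hs : s ∈ Set.Ioo (0:ℝ) 1)
    (Cds : ℝ) (hC : 0 < Cds)
    (p Λ : ℝ) (hp : 1 < p) (hΛ : -(d:ℝ) - p * s ≤ Λ)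
    (v : Ed d → ℝ) (hv : ContDiff ℝ (⊤ : ℕ∞) v)
    (hvi : IntegrableOn (fun y : Ed d => |v y| ^ p * ‖y‖ ^ Λ) {y : Ed d | 1 < ‖y‖}) :
    Continuous (fracLap d s Cds v) ∧
    ∀ φ : Ed d → ℝ, ContDiff ℝ (⊤ : ℕ∞) φ → HasCompactSupport φ →
      ∫ x : Ed d, v x * fracLap d s Cds φ x = ∫ x : Ed d, fracLap d s Cds v x * φ x := by
  have hw : (finrank ℝ (Ed d) : ℝ) * (p - 1) < Λ + p * (d + 2 * s) := by
    rw [finrank_euclideanSpace_fin]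
    nlinarith [mul_pos (zero_lt_one.trans hp) hs.1]
  have hgen := stmt9_general hd hs Cds (contDiff_infty.1 hv 2)
    (integrableOn_mul_norm_rpow_neg_of_rpow_weight hp hw hv.continuous.aestronglyMeasurable hvi)
  exact ⟨hgen.1, fun φ hφ => hgen.2 φ (contDiff_infty.1 hφ 2)⟩
end

section
/- Let d > 2s with s ∈ (0,1), φ ∈ C_c^∞(ℝ^d), Φ = I_{d,s} ∗ φ its Riesz potential, and p ∈ (1, d/(d−2s)). Then the function l_{p,s}(Φ)(x) = ∫_{ℝ^d} |Φ(x)−Φ(y)|^p/|x−y|^{d+ps} dy is continuous on ℝ^d and there exists K > 0 such that l_{p,s}(Φ)(x) ≤ K (1+|x|)^{−p(d−s)} for all x ∈ ℝ^d. -/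
open MeasureTheory Filter Metric Set
open scoped Topology ENNReal

/-!
The potential `Φ` of `φ` for the kernel `|z|^{-a}` is bounded and Lipschitz, and away from the
support of `φ` the kernel can be estimated pointwise, so `|Φ(x)| ≲ (1 + |x|)^{-a}` while increments
at scale `|x|` gain one more power. For such a function put `w = 1 + |x|` and split the integral
over `y`. Where `|x - y| ≤ w / 2`, the increment bound leaves the locally integrable kernel
`|x - y|^{-(n - p(1 - s))}`. Where `|x - y| > w / 2` and `|y| > w`, the decay of `Φ` leaves the
kernel `|x - y|^{-(n + ps)}`, integrable at infinity. Where `|x - y| > w / 2` and `|y| ≤ w`, the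
kernel is `≲ w^{-(n + ps)}` and `|y|^{-pa}` is locally integrable since `pa < n`. Scaling by `w`
evaluates each of the three to a constant times `w^{-p(a + s)}`.
-/

open Module
open scoped Pointwise NNReal

section PowerIntegrals

variable {E : Type*} [NormedAddCommGroup E] [NormedSpace ℝ E] [FiniteDimensional ℝ E]
  [MeasurableSpace E] [BorelSpace E] {μ : Measure E} [μ.IsAddHaarMeasure] {b r : ℝ}

lemma locallyIntegrable_norm_rpow_neg [Nontrivial E] (hb : b < finrank ℝ E) :
    LocallyIntegrable (fun z : E => ‖z‖ ^ (-b)) μ :=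
  locallyIntegrable_of_norm_le_rpow (C := 1) finrank_pos hb
    (.of_forall fun z => by rw [Real.norm_of_nonneg (by positivity), one_mul])
    (measurable_norm.pow_const _).aestronglyMeasurable

lemma integrableOn_closedBall_norm_rpow_neg [Nontrivial E] (hb : b < finrank ℝ E) (c : E) (r : ℝ) :
    IntegrableOn (fun z : E => ‖z‖ ^ (-b)) (closedBall c r) μ :=
  (locallyIntegrable_norm_rpow_neg hb).integrableOn_isCompact (isCompact_closedBall c r)

lemma integrableOn_compl_closedBall_norm_rpow_neg (hb : finrank ℝ E < b) (hr : 0 < r) :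
    IntegrableOn (fun z : E => ‖z‖ ^ (-b)) (closedBall 0 r)ᶜ μ := by
  have hb₀ : 0 ≤ b := (Nat.cast_nonneg _).trans hb.le
  refine ((integrable_one_add_norm hb).integrableOn.const_mul ((1 + r⁻¹) ^ b)).mono'
    (measurable_norm.pow_const _).aestronglyMeasurable
    ((ae_restrict_iff' measurableSet_closedBall.compl).2 (.of_forall fun z hz => ?_))
  have hrz : r < ‖z‖ := by simpa using hz
  have hz₀ : 0 < ‖z‖ := hr.trans hrz
  have hle : 1 + ‖z‖ ≤ (1 + r⁻¹) * ‖z‖ := by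
    have : 1 ≤ r⁻¹ * ‖z‖ := by rw [inv_mul_eq_div, one_le_div hr]; exact hrz.le
    linarith
  rw [Real.norm_of_nonneg (by positivity), Real.rpow_neg hz₀.le, Real.rpow_neg (by positivity),
    ← div_eq_mul_inv, inv_eq_one_div, div_le_div_iff₀ (by positivity) (by positivity), one_mul,
    ← Real.mul_rpow (by positivity) hz₀.le]
  exact Real.rpow_le_rpow (by positivity) hle hb₀

lemma setIntegral_smul_norm_rpow_neg (hr : 0 < r) (S : Set E) :
    ∫ z in r • S, ‖z‖ ^ (-b) ∂μ = r ^ (finrank ℝ E - b) * ∫ z in S, ‖z‖ ^ (-b) ∂μ := by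
  have hscale := Measure.setIntegral_comp_smul_of_pos μ (fun z : E => ‖z‖ ^ (-b)) S hr
  simp only [norm_smul, Real.norm_of_nonneg hr.le, Real.mul_rpow hr.le (norm_nonneg _),
    integral_const_mul, smul_eq_mul] at hscale
  rw [sub_eq_add_neg, Real.rpow_add hr, Real.rpow_natCast, mul_assoc, hscale,
    mul_inv_cancel_left₀ (by positivity)]

lemma setIntegral_closedBall_norm_rpow_neg (hr : 0 < r) {t : ℝ} (ht : 0 ≤ t) :
    ∫ z in closedBall (0 : E) (r * t), ‖z‖ ^ (-b) ∂μ =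
      r ^ (finrank ℝ E - b) * ∫ z in closedBall (0 : E) t, ‖z‖ ^ (-b) ∂μ := by
  rw [← setIntegral_smul_norm_rpow_neg hr, smul_closedBall _ _ ht, smul_zero,
    Real.norm_of_nonneg hr.le]

lemma setIntegral_compl_closedBall_norm_rpow_neg (hr : 0 < r) {t : ℝ} (ht : 0 ≤ t) :
    ∫ z in (closedBall (0 : E) (r * t))ᶜ, ‖z‖ ^ (-b) ∂μ =
      r ^ (finrank ℝ E - b) * ∫ z in (closedBall (0 : E) t)ᶜ, ‖z‖ ^ (-b) ∂μ := by
  have hcompl : r • (closedBall (0 : E) t)ᶜ = (closedBall 0 (r * t))ᶜ := by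
    rw [← Units.val_mk0 hr.ne', ← Units.smul_def, smul_set_compl, Units.smul_def, Units.val_mk0,
      smul_closedBall _ _ ht, smul_zero, Real.norm_of_nonneg hr.le]
  rw [← setIntegral_smul_norm_rpow_neg hr, hcompl]

lemma setIntegral_norm_rpow_neg_le [Nontrivial E] (hb₀ : 0 ≤ b) (hb : b < finrank ℝ E)
    {S : Set E} (hS : IsCompact S) :
    ∫ z in S, ‖z‖ ^ (-b) ∂μ ≤ (∫ z in closedBall (0 : E) 1, ‖z‖ ^ (-b) ∂μ) + μ.real S := by
  have hinner : ∫ z in S ∩ closedBall 0 1, ‖z‖ ^ (-b) ∂μ ≤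
      ∫ z in closedBall (0 : E) 1, ‖z‖ ^ (-b) ∂μ :=
    setIntegral_mono_set (integrableOn_closedBall_norm_rpow_neg hb _ _)
      (.of_forall fun z => by positivity) inter_subset_right.eventuallyLE
  have houter : ∫ z in S \ closedBall 0 1, ‖z‖ ^ (-b) ∂μ ≤ μ.real S := by
    have hfin : μ (S \ closedBall 0 1) < ⊤ :=
      (measure_mono sdiff_subset).trans_lt hS.measure_lt_top
    calc ∫ z in S \ closedBall 0 1, ‖z‖ ^ (-b) ∂μ
      _ ≤ 1 * μ.real (S \ closedBall 0 1) := by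
        refine (Real.le_norm_self _).trans
          (norm_setIntegral_le_of_norm_le_const hfin fun z hz => ?_)
        have hz₁ : 1 < ‖z‖ := by simpa using hz.2
        rw [Real.norm_of_nonneg (by positivity)]
        exact Real.rpow_le_one_of_one_le_of_nonpos hz₁.le (neg_nonpos.2 hb₀)
      _ ≤ μ.real S := by
        rw [one_mul]
        exact measureReal_mono sdiff_subset hS.measure_lt_top.ne
  rw [← integral_inter_add_sdiff measurableSet_closedBall
    ((locallyIntegrable_norm_rpow_neg hb).integrableOn_isCompact hS)]
  exact add_le_add hinner houter

end PowerIntegrals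

lemma abs_rpow_neg_sub_rpow_neg_le {a m u v : ℝ} (ha : 0 ≤ a) (hm : 0 < m) (hu : m ≤ u)
    (hv : m ≤ v) : |u ^ (-a) - v ^ (-a)| ≤ a * m ^ (-(a + 1)) * |u - v| := by
  refine (convex_Ici m).norm_image_sub_le_of_norm_hasDerivWithin_le (f := fun t : ℝ => t ^ (-a))
    (f' := fun t => -a * t ^ (-a - 1)) (fun t (ht : m ≤ t) => ?_) (fun t (ht : m ≤ t) => ?_) hv hu
  · exact (Real.hasDerivAt_rpow_const (.inl (hm.trans_le ht).ne')).hasDerivWithinAt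
  · have ht₀ : 0 < t := hm.trans_le ht
    rw [norm_mul, norm_neg, Real.norm_of_nonneg ha, Real.norm_of_nonneg (by positivity),
      ← neg_add']
    exact mul_le_mul_of_nonneg_left (Real.rpow_le_rpow_of_nonpos hm ht (by linarith)) ha

lemma one_add_norm_rpow_neg_le_one {E : Type*} [SeminormedAddCommGroup E] {b : ℝ} (hb : 0 ≤ b)
    (x : E) : (1 + ‖x‖) ^ (-b) ≤ 1 :=
  Real.rpow_le_one_of_one_le_of_nonpos (le_add_of_nonneg_right (norm_nonneg x)) (neg_nonpos.2 hb)

/-- First-order decay at rate `a`: `f` is `O(|x|^{-a})` with gradient `O(|x|^{-(a+1)})`. The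
gradient bound is phrased through increments at scale at most `(1 + |x|) / 2`, so that `f` need
not be differentiable. -/
structure HasFirstOrderDecay {E F : Type*} [NormedAddCommGroup E] [NormedAddCommGroup F]
    (a C : ℝ) (f : E → F) : Prop where
  norm_le : ∀ x, ‖f x‖ ≤ C * (1 + ‖x‖) ^ (-a)
  norm_sub_le : ∀ x y, ‖x - y‖ ≤ (1 + ‖x‖) / 2 →
    ‖f x - f y‖ ≤ C * (1 + ‖x‖) ^ (-(a + 1)) * ‖x - y‖

namespace HasFirstOrderDecay

variable {E F : Type*} [NormedAddCommGroup E] [NormedAddCommGroup F] {a C : ℝ} {f : E → F}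

lemma nonneg (hf : HasFirstOrderDecay a C f) : 0 ≤ C := by
  simpa using (norm_nonneg _).trans (hf.norm_le 0)

lemma norm_le_const (hf : HasFirstOrderDecay a C f) (ha : 0 ≤ a) (x : E) : ‖f x‖ ≤ C :=
  (hf.norm_le x).trans (mul_le_of_le_one_right hf.nonneg (one_add_norm_rpow_neg_le_one ha x))

lemma lipschitzWith (hf : HasFirstOrderDecay a C f) (ha : 0 ≤ a) :
    LipschitzWith (4 * C).toNNReal f := by
  have hC := hf.nonneg
  refine .of_dist_le' fun x y => ?_
  rw [dist_eq_norm, dist_eq_norm]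
  rcases le_total ‖x - y‖ (1 / 2) with hxy | hxy
  · calc ‖f x - f y‖
      _ ≤ C * (1 + ‖x‖) ^ (-(a + 1)) * ‖x - y‖ :=
        hf.norm_sub_le x y (by linarith [norm_nonneg x])
      _ ≤ 4 * C * ‖x - y‖ := by
        refine mul_le_mul_of_nonneg_right (?_ : _ ≤ 4 * C) (norm_nonneg _)
        linarith [mul_le_of_le_one_right hC
          (one_add_norm_rpow_neg_le_one (b := a + 1) (by linarith) x)]
  · have := norm_sub_le_of_le (hf.norm_le_const ha x) (hf.norm_le_const ha y)
    nlinarith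

lemma exists_of_bounded_of_lipschitzWith {M T : ℝ} {L : ℝ≥0} (ha : 0 ≤ a) (hC : 0 ≤ C)
    (hT : 0 ≤ T) (hM : ∀ x, ‖f x‖ ≤ M) (hL : LipschitzWith L f)
    (hfar : ∀ x, T ≤ ‖x‖ → ‖f x‖ ≤ C * (1 + ‖x‖) ^ (-a))
    (hfar_sub : ∀ x y, T ≤ ‖x‖ → ‖x - y‖ ≤ (1 + ‖x‖) / 2 →
      ‖f x - f y‖ ≤ C * (1 + ‖x‖) ^ (-(a + 1)) * ‖x - y‖) :
    ∃ C', HasFirstOrderDecay a C' f := by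
  have hM₀ : 0 ≤ M := (norm_nonneg _).trans (hM 0)
  have one_le {b : ℝ} (hb : 0 ≤ b) {x : E} (hx : ‖x‖ ≤ T) :
      1 ≤ (1 + T) ^ b * (1 + ‖x‖) ^ (-b) := by
    rw [Real.rpow_neg (by positivity), ← div_eq_mul_inv, one_le_div (by positivity)]
    gcongr
  refine ⟨C + M * (1 + T) ^ a + L * (1 + T) ^ (a + 1), fun x => ?_, fun x y hxy => ?_⟩
  · rcases le_total ‖x‖ T with hx | hx
    · calc ‖f x‖
        _ ≤ M * ((1 + T) ^ a * (1 + ‖x‖) ^ (-a)) :=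
          (hM x).trans (le_mul_of_one_le_right hM₀ (one_le ha hx))
        _ = (M * (1 + T) ^ a) * (1 + ‖x‖) ^ (-a) := by ring
        _ ≤ _ := by gcongr; linarith [show 0 ≤ L * (1 + T) ^ (a + 1) by positivity]
    · refine (hfar x hx).trans ?_
      gcongr
      linarith [show 0 ≤ M * (1 + T) ^ a + L * (1 + T) ^ (a + 1) by positivity]
  · rcases le_total ‖x‖ T with hx | hx
    · calc ‖f x - f y‖
        _ ≤ L * ‖x - y‖ := hL.norm_sub_le x y
        _ ≤ L * ‖x - y‖ * ((1 + T) ^ (a + 1) * (1 + ‖x‖) ^ (-(a + 1))) :=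
          le_mul_of_one_le_right (by positivity) (one_le (by positivity) hx)
        _ = (L * (1 + T) ^ (a + 1)) * (1 + ‖x‖) ^ (-(a + 1)) * ‖x - y‖ := by ring
        _ ≤ _ := by gcongr; linarith [show 0 ≤ M * (1 + T) ^ a by positivity]
    · refine (hfar_sub x y hx hxy).trans ?_
      gcongr
      linarith [show 0 ≤ M * (1 + T) ^ a + L * (1 + T) ^ (a + 1) by positivity]

end HasFirstOrderDecay

lemma apply_sub_eq_zero_of_notMem_closedBall {E : Type*} [NormedAddCommGroup E] {φ : E → ℝ}
    {R : ℝ} (hR : tsupport φ ⊆ closedBall 0 R) {x z : E} (hz : z ∉ closedBall x R) :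
    φ (x - z) = 0 := by
  refine image_eq_zero_of_notMem_tsupport fun h => hz ?_
  simpa [dist_eq_norm, norm_sub_rev] using hR h

/-- The potential of `φ` for the unnormalised Riesz kernel `|z|^{-a}`; the Riesz potential of order
`2s` is the case `a = d - 2s`, up to a constant. -/
noncomputable def rieszPotential {E : Type*} [NormedAddCommGroup E] [MeasurableSpace E]
    (μ : Measure E) (a : ℝ) (φ : E → ℝ) (x : E) : ℝ :=
  ∫ y, ‖x - y‖ ^ (-a) * φ y ∂μ

lemma abs_rieszPotential_le_of_forall_le_norm_sub {E : Type*} [NormedAddCommGroup E]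
    [MeasurableSpace E] {μ : Measure E} {φ : E → ℝ} {a D M : ℝ} (ha₀ : 0 ≤ a) (hD : 0 < D)
    (hM : ∀ z, |φ z| ≤ M) {S : Set E} (hS : μ S < ⊤) (hφS : ∀ z ∉ S, φ z = 0) {x : E}
    (hx : ∀ z ∈ S, D ≤ ‖x - z‖) :
    |rieszPotential μ a φ x| ≤ D ^ (-a) * M * μ.real S := by
  rw [rieszPotential, ← setIntegral_eq_integral_of_forall_compl_eq_zero (s := S)
    (f := fun z => ‖x - z‖ ^ (-a) * φ z) (fun z hz => by rw [hφS z hz, mul_zero])]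
  rw [← Real.norm_eq_abs]
  refine norm_setIntegral_le_of_norm_le_const hS fun z hz => ?_
  rw [norm_mul, Real.norm_of_nonneg (by positivity)]
  exact mul_le_mul (Real.rpow_le_rpow_of_nonpos hD (hx z hz) (neg_nonpos.2 ha₀)) (hM z)
    (norm_nonneg _) (by positivity)

lemma one_add_norm_div_eight_le_norm_sub {E : Type*} [SeminormedAddCommGroup E] {R : ℝ} {x y z : E}
    (hx : 4 * R + 2 ≤ ‖x‖) (hxy : ‖x - y‖ ≤ (1 + ‖x‖) / 2) (hz : z ∈ closedBall 0 R) :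
    (1 + ‖x‖) / 8 ≤ ‖y - z‖ := by
  rw [mem_closedBall_zero_iff] at hz
  linarith [norm_nonneg z, norm_sub_norm_le y z, norm_sub_norm_le x y]

section RieszPotential

variable {E : Type*} [NormedAddCommGroup E] [NormedSpace ℝ E] [FiniteDimensional ℝ E]
  [MeasurableSpace E] [BorelSpace E] {μ : Measure E} [μ.IsAddHaarMeasure] {a M R : ℝ} {L : ℝ≥0}
  {φ : E → ℝ}

lemma rieszPotential_eq_integral_norm_rpow_mul (a : ℝ) (φ : E → ℝ) (x : E) :
    rieszPotential μ a φ x = ∫ z, ‖z‖ ^ (-a) * φ (x - z) ∂μ := by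
  rw [rieszPotential, ← integral_sub_left_eq_self _ μ x]
  simp only [sub_sub_cancel]

lemma integrable_norm_rpow_mul [Nontrivial E] (ha : a < finrank ℝ E) (hφ : Continuous φ)
    (hφc : HasCompactSupport φ) (x : E) :
    Integrable (fun z => ‖z‖ ^ (-a) * φ (x - z)) μ :=
  (locallyIntegrable_norm_rpow_neg ha).integrable_smul_right_of_hasCompactSupport
    (hφ.comp (continuous_const.sub continuous_id)) (hφc.comp_homeomorph (Homeomorph.subLeft x))

lemma integrable_norm_sub_rpow_mul [Nontrivial E] (ha : a < finrank ℝ E) (hφ : Continuous φ)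
    (hφc : HasCompactSupport φ) (x : E) :
    Integrable (fun y => ‖x - y‖ ^ (-a) * φ y) μ := by
  simpa only [sub_sub_cancel] using (integrable_norm_rpow_mul ha hφ hφc x).comp_sub_left x

lemma abs_integral_norm_rpow_mul_le [Nontrivial E] (ha₀ : 0 ≤ a) (ha : a < finrank ℝ E)
    (hM : ∀ z, |φ z| ≤ M) {S : Set E} (hS : IsCompact S) (hφS : ∀ z ∉ S, φ z = 0) :
    |∫ z, ‖z‖ ^ (-a) * φ z ∂μ| ≤
      M * ((∫ z in closedBall (0 : E) 1, ‖z‖ ^ (-a) ∂μ) + μ.real S) := by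
  have hM₀ : 0 ≤ M := (abs_nonneg _).trans (hM 0)
  rw [← setIntegral_eq_integral_of_forall_compl_eq_zero (s := S)
    (fun z hz => by rw [hφS z hz, mul_zero])]
  calc |∫ z in S, ‖z‖ ^ (-a) * φ z ∂μ|
    _ ≤ ∫ z in S, M * ‖z‖ ^ (-a) ∂μ := by
      rw [← Real.norm_eq_abs]
      refine norm_integral_le_of_norm_le
        (((locallyIntegrable_norm_rpow_neg (μ := μ) ha).integrableOn_isCompact hS).const_mul M)
        (.of_forall fun z => ?_)
      rw [norm_mul, Real.norm_of_nonneg (by positivity), mul_comm]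
      exact mul_le_mul_of_nonneg_right (hM z) (by positivity)
    _ ≤ _ := by
      rw [integral_const_mul]
      exact mul_le_mul_of_nonneg_left (setIntegral_norm_rpow_neg_le ha₀ ha hS) hM₀

lemma abs_rieszPotential_le [Nontrivial E] (ha₀ : 0 ≤ a) (ha : a < finrank ℝ E)
    (hM : ∀ z, |φ z| ≤ M) (hR : tsupport φ ⊆ closedBall 0 R) (x : E) :
    |rieszPotential μ a φ x| ≤
      M * ((∫ z in closedBall (0 : E) 1, ‖z‖ ^ (-a) ∂μ) + μ.real (closedBall (0 : E) R)) := by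
  rw [rieszPotential_eq_integral_norm_rpow_mul, ← Measure.addHaar_real_closedBall_center μ x]
  exact abs_integral_norm_rpow_mul_le ha₀ ha (fun z => hM _) (isCompact_closedBall x R)
    fun z => apply_sub_eq_zero_of_notMem_closedBall hR

lemma exists_lipschitzWith_rieszPotential [Nontrivial E] (ha₀ : 0 ≤ a) (ha : a < finrank ℝ E)
    (hφ : LipschitzWith L φ) (hφc : HasCompactSupport φ) :
    ∃ L', LipschitzWith L' (rieszPotential μ a φ) := by
  obtain ⟨R, hR⟩ := hφc.isCompact.isBounded.subset_closedBall (0 : E)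
  set J := (∫ z in closedBall (0 : E) 1, ‖z‖ ^ (-a) ∂μ) + 2 * μ.real (closedBall (0 : E) R) with hJ
  refine ⟨(L * J).toNNReal, .of_dist_le' fun x y => ?_⟩
  have hvol : μ.real (closedBall x R ∪ closedBall y R) ≤ 2 * μ.real (closedBall (0 : E) R) := by
    refine (measureReal_union_le _ _).trans_eq ?_
    rw [Measure.addHaar_real_closedBall_center μ x, Measure.addHaar_real_closedBall_center μ y,
      two_mul]
  rw [Real.dist_eq, rieszPotential_eq_integral_norm_rpow_mul,
    rieszPotential_eq_integral_norm_rpow_mul, ← integral_sub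
      (integrable_norm_rpow_mul ha hφ.continuous hφc x)
      (integrable_norm_rpow_mul ha hφ.continuous hφc y)]
  simp only [← mul_sub]
  calc |∫ z, ‖z‖ ^ (-a) * (φ (x - z) - φ (y - z)) ∂μ|
    _ ≤ L * dist x y * ((∫ z in closedBall (0 : E) 1, ‖z‖ ^ (-a) ∂μ) +
        μ.real (closedBall x R ∪ closedBall y R)) := by
      refine abs_integral_norm_rpow_mul_le (φ := fun z => φ (x - z) - φ (y - z)) ha₀ ha
        (fun z => ?_) ((isCompact_closedBall x R).union (isCompact_closedBall y R)) fun z hz => ?_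
      · simpa only [Real.dist_eq, dist_sub_right] using hφ.dist_le_mul (x - z) (y - z)
      · rw [mem_union, not_or] at hz
        rw [apply_sub_eq_zero_of_notMem_closedBall hR hz.1,
          apply_sub_eq_zero_of_notMem_closedBall hR hz.2, sub_zero]
    _ ≤ L * dist x y * J := by rw [hJ]; gcongr
    _ = L * J * dist x y := by ring

lemma abs_rieszPotential_sub_le_of_forall_le_norm_sub [Nontrivial E] {D : ℝ} (ha₀ : 0 ≤ a)
    (ha : a < finrank ℝ E) (hφ : Continuous φ) (hφc : HasCompactSupport φ) (hD : 0 < D)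
    (hM : ∀ z, |φ z| ≤ M) {S : Set E} (hS : μ S < ⊤) (hφS : ∀ z ∉ S, φ z = 0) {x y : E}
    (hx : ∀ z ∈ S, D ≤ ‖x - z‖) (hy : ∀ z ∈ S, D ≤ ‖y - z‖) :
    |rieszPotential μ a φ x - rieszPotential μ a φ y| ≤
      a * D ^ (-(a + 1)) * ‖x - y‖ * M * μ.real S := by
  rw [rieszPotential, rieszPotential, ← integral_sub (integrable_norm_sub_rpow_mul ha hφ hφc x)
    (integrable_norm_sub_rpow_mul ha hφ hφc y)]
  simp only [← sub_mul]
  rw [← setIntegral_eq_integral_of_forall_compl_eq_zero (s := S)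
    (f := fun z => (‖x - z‖ ^ (-a) - ‖y - z‖ ^ (-a)) * φ z)
    (fun z hz => by rw [hφS z hz, mul_zero])]
  rw [← Real.norm_eq_abs]
  refine norm_setIntegral_le_of_norm_le_const hS fun z hz => ?_
  have hkernel : |‖x - z‖ ^ (-a) - ‖y - z‖ ^ (-a)| ≤ a * D ^ (-(a + 1)) * ‖x - y‖ := by
    refine (abs_rpow_neg_sub_rpow_neg_le ha₀ hD (hx z hz) (hy z hz)).trans ?_
    gcongr
    simpa only [sub_sub_sub_cancel_right] using abs_norm_sub_norm_le (x - z) (y - z)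
  rw [norm_mul]
  exact mul_le_mul hkernel (hM z) (norm_nonneg _) (by positivity)

lemma exists_hasFirstOrderDecay_rieszPotential [Nontrivial E] (ha₀ : 0 ≤ a)
    (ha : a < finrank ℝ E) (hφ : LipschitzWith L φ) (hφc : HasCompactSupport φ) :
    ∃ C, HasFirstOrderDecay a C (rieszPotential μ a φ) := by
  obtain ⟨R, hR₀, hR⟩ := hφc.isCompact.isBounded.subset_closedBall_lt 0 (0 : E)
  obtain ⟨M, hM⟩ := hφ.continuous.bounded_above_of_compact_support hφc
  obtain ⟨L', hL'⟩ := exists_lipschitzWith_rieszPotential (μ := μ) ha₀ ha hφ hφc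
  have hM₀ : 0 ≤ M := (norm_nonneg _).trans (hM 0)
  have hsupp : ∀ z ∉ closedBall (0 : E) R, φ z = 0 := fun z hz =>
    image_eq_zero_of_notMem_tsupport fun h => hz (hR h)
  have hscale (x : E) (b : ℝ) : ((1 + ‖x‖) / 8) ^ (-b) = 8 ^ b * (1 + ‖x‖) ^ (-b) := by
    rw [Real.div_rpow (by positivity) (by norm_num), Real.rpow_neg (by norm_num : (0 : ℝ) ≤ 8),
      div_inv_eq_mul, mul_comm]
  have hvol : μ (closedBall (0 : E) R) < ⊤ := measure_closedBall_lt_top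
  set V := μ.real (closedBall (0 : E) R)
  refine HasFirstOrderDecay.exists_of_bounded_of_lipschitzWith (T := 4 * R + 2)
    (C := 8 ^ a * M * V + a * 8 ^ (a + 1) * M * V) ha₀ (by positivity) (by positivity)
    (abs_rieszPotential_le ha₀ ha hM hR) hL' (fun x hx => ?_) fun x y hx hxy => ?_
  · calc |rieszPotential μ a φ x|
      _ ≤ ((1 + ‖x‖) / 8) ^ (-a) * M * V :=
        abs_rieszPotential_le_of_forall_le_norm_sub ha₀ (by positivity) hM hvol hsupp fun z =>
          one_add_norm_div_eight_le_norm_sub hx (by rw [sub_self, norm_zero]; positivity)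
      _ = 8 ^ a * M * V * (1 + ‖x‖) ^ (-a) := by rw [hscale]; ring
      _ ≤ _ := by
        gcongr
        exact le_add_of_nonneg_right (by positivity)
  · calc |rieszPotential μ a φ x - rieszPotential μ a φ y|
      _ ≤ a * ((1 + ‖x‖) / 8) ^ (-(a + 1)) * ‖x - y‖ * M * V :=
        abs_rieszPotential_sub_le_of_forall_le_norm_sub ha₀ ha hφ.continuous hφc (by positivity)
          hM hvol hsupp
          (fun z => one_add_norm_div_eight_le_norm_sub hx (by rw [sub_self, norm_zero]; positivity))
          fun z => one_add_norm_div_eight_le_norm_sub hx hxy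
      _ = a * 8 ^ (a + 1) * M * V * (1 + ‖x‖) ^ (-(a + 1)) * ‖x - y‖ := by rw [hscale]; ring
      _ ≤ _ := by
        gcongr
        exact le_add_of_nonneg_left (by positivity)

end RieszPotential

/-- The integrand `‖f x - f y‖ ^ p / |x - y| ^ (n + p s)`, `n = dim E`, of the Gagliardo seminorm
of order `s` and exponent `p`. -/
noncomputable def gagliardoQuotient {E F : Type*} [NormedAddCommGroup E] [NormedSpace ℝ E]
    [NormedAddCommGroup F] (p s : ℝ) (f : E → F) (x y : E) : ℝ :=
  ‖f x - f y‖ ^ p / dist x y ^ (finrank ℝ E + p * s)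

/-- The density `l_{p,s}(f)` of the Gagliardo seminorm, whose integral over `E` is the `p`-th power
of the seminorm. -/
noncomputable def gagliardoDensity {E F : Type*} [NormedAddCommGroup E] [NormedSpace ℝ E]
    [MeasurableSpace E] [NormedAddCommGroup F] (μ : Measure E) (p s : ℝ) (f : E → F) (x : E) : ℝ :=
  ∫ y, gagliardoQuotient p s f x y ∂μ

section GagliardoQuotient

variable {E F : Type*} [NormedAddCommGroup E] [NormedSpace ℝ E] [NormedAddCommGroup F]
  {p s D : ℝ} {f : E → F} {x y : E}

lemma gagliardoQuotient_nonneg : 0 ≤ gagliardoQuotient p s f x y := by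
  unfold gagliardoQuotient
  positivity

lemma gagliardoQuotient_sub_right (p s : ℝ) (f : E → F) (x z : E) :
    gagliardoQuotient p s f x (x - z) =
      ‖f x - f (x - z)‖ ^ p / ‖z‖ ^ (finrank ℝ E + p * s) := by
  rw [gagliardoQuotient, dist_eq_norm, sub_sub_cancel]

lemma gagliardoQuotient_le_of_norm_sub_le (hp : 0 ≤ p) (h : ‖f x - f y‖ ≤ D) :
    gagliardoQuotient p s f x y ≤ D ^ p * ‖x - y‖ ^ (-(finrank ℝ E + p * s)) := by
  rw [gagliardoQuotient, dist_eq_norm, Real.rpow_neg (norm_nonneg _), div_eq_mul_inv]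
  gcongr

lemma gagliardoQuotient_le_of_norm_sub_le_mul (hp : 0 < p) (hD : 0 ≤ D)
    (h : ‖f x - f y‖ ≤ D * ‖x - y‖) :
    gagliardoQuotient p s f x y ≤ D ^ p * ‖x - y‖ ^ (-(finrank ℝ E - p * (1 - s))) := by
  rcases eq_or_ne x y with rfl | hxy
  · rw [gagliardoQuotient, sub_self, norm_zero, Real.zero_rpow hp.ne', zero_div]
    positivity
  · have hpos : 0 < ‖x - y‖ := norm_sub_pos_iff.2 hxy
    refine (gagliardoQuotient_le_of_norm_sub_le hp.le h).trans_eq ?_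
    rw [Real.mul_rpow hD hpos.le, mul_assoc, ← Real.rpow_add hpos]
    ring_nf

lemma aestronglyMeasurable_gagliardoQuotient_sub_right [MeasurableSpace E]
    [OpensMeasurableSpace E] {μ : Measure E} (hf : Continuous f) (x : E) :
    AEStronglyMeasurable (fun z => gagliardoQuotient p s f x (x - z)) μ := by
  simp only [gagliardoQuotient_sub_right]
  have hnum : Continuous fun z => ‖f x - f (x - z)‖ := by fun_prop
  exact ((hnum.measurable.pow_const p).div (measurable_norm.pow_const _)).aestronglyMeasurable

end GagliardoQuotient

section GagliardoDensity

variable {E F : Type*} [NormedAddCommGroup E] [NormedSpace ℝ E] [FiniteDimensional ℝ E]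
  [Nontrivial E] [MeasurableSpace E] [BorelSpace E] [NormedAddCommGroup F] {μ : Measure E}
  [μ.IsAddHaarMeasure] {p s M : ℝ} {L : ℝ≥0} {f : E → F}

lemma exists_integrable_gagliardoQuotient_le (hp : 0 < p) (hs : s ∈ Ioo 0 1)
    (hf : LipschitzWith L f) (hM : ∀ x, ‖f x‖ ≤ M) :
    ∃ g : E → ℝ, Integrable g μ ∧ ∀ x z, ‖gagliardoQuotient p s f x (x - z)‖ ≤ g z := by
  classical
  have hnear : (finrank ℝ E : ℝ) - p * (1 - s) < finrank ℝ E :=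
    sub_lt_self _ (mul_pos hp (sub_pos.2 hs.2))
  have hfar : (finrank ℝ E : ℝ) < finrank ℝ E + p * s := lt_add_of_pos_right _ (mul_pos hp hs.1)
  refine ⟨(closedBall 0 1).piecewise (fun z => L ^ p * ‖z‖ ^ (-(finrank ℝ E - p * (1 - s))))
    fun z => (M + M) ^ p * ‖z‖ ^ (-(finrank ℝ E + p * s)),
    .piecewise measurableSet_closedBall
      ((integrableOn_closedBall_norm_rpow_neg hnear 0 1).const_mul _)
      ((integrableOn_compl_closedBall_norm_rpow_neg hfar one_pos).const_mul _), fun x z => ?_⟩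
  rw [Real.norm_of_nonneg gagliardoQuotient_nonneg]
  by_cases hz : z ∈ closedBall 0 1
  · rw [piecewise_eq_of_mem _ _ _ hz]
    simpa only [sub_sub_cancel] using
      gagliardoQuotient_le_of_norm_sub_le_mul hp L.coe_nonneg (hf.norm_sub_le x (x - z))
  · rw [piecewise_eq_of_notMem _ _ _ hz]
    simpa only [sub_sub_cancel] using
      gagliardoQuotient_le_of_norm_sub_le (s := s) hp.le (norm_sub_le_of_le (hM x) (hM (x - z)))

lemma integrable_gagliardoQuotient (hp : 0 < p) (hs : s ∈ Ioo 0 1) (hf : LipschitzWith L f)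
    (hM : ∀ x, ‖f x‖ ≤ M) (x : E) : Integrable (gagliardoQuotient p s f x) μ := by
  obtain ⟨g, hg, hle⟩ := exists_integrable_gagliardoQuotient_le (μ := μ) hp hs hf hM
  have hshift : Integrable (fun z => gagliardoQuotient p s f x (x - z)) μ :=
    hg.mono' (aestronglyMeasurable_gagliardoQuotient_sub_right hf.continuous x) (.of_forall (hle x))
  simpa only [sub_sub_cancel] using hshift.comp_sub_left x

lemma continuous_gagliardoDensity (hp : 0 < p) (hs : s ∈ Ioo 0 1) (hf : LipschitzWith L f)
    (hM : ∀ x, ‖f x‖ ≤ M) : Continuous (gagliardoDensity μ p s f) := by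
  obtain ⟨g, hg, hle⟩ := exists_integrable_gagliardoQuotient_le (μ := μ) hp hs hf hM
  have hshift : gagliardoDensity μ p s f =
      fun x => ∫ z, gagliardoQuotient p s f x (x - z) ∂μ :=
    funext fun x => (integral_sub_left_eq_self _ μ x).symm
  rw [hshift]
  refine continuous_of_dominated
    (fun x => aestronglyMeasurable_gagliardoQuotient_sub_right hf.continuous x)
    (fun x => .of_forall (hle x)) hg (.of_forall fun z => ?_)
  simp only [gagliardoQuotient_sub_right]
  have hnum : Continuous fun x => ‖f x - f (x - z)‖ := by
    have := hf.continuous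
    fun_prop
  exact (hnum.rpow_const fun _ => .inr hp.le).div_const _

end GagliardoDensity

section TranslatedPowerIntegrals

variable {E : Type*} [NormedAddCommGroup E] [NormedSpace ℝ E] [FiniteDimensional ℝ E]
  [MeasurableSpace E] [BorelSpace E] {μ : Measure E} [μ.IsAddHaarMeasure] {b r t : ℝ}

lemma preimage_const_sub_closedBall_zero {E : Type*} [SeminormedAddCommGroup E] (x : E) (r : ℝ) :
    (fun y => x - y) ⁻¹' closedBall 0 r = closedBall x r := by
  ext y
  rw [mem_preimage, mem_closedBall_zero_iff, mem_closedBall', dist_eq_norm]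

lemma setIntegral_preimage_const_sub (x : E) (g : E → ℝ) (S : Set E) :
    ∫ y in (fun y => x - y) ⁻¹' S, g (x - y) ∂μ = ∫ z in S, g z ∂μ :=
  (Measure.measurePreserving_sub_left μ x).setIntegral_preimage_emb
    (MeasurableEquiv.subLeft x).measurableEmbedding g S

lemma integrableOn_preimage_const_sub {x : E} {g : E → ℝ} {S : Set E} (hg : IntegrableOn g S μ) :
    IntegrableOn (fun y => g (x - y)) ((fun y => x - y) ⁻¹' S) μ :=
  ((Measure.measurePreserving_sub_left μ x).integrableOn_comp_preimage
    (MeasurableEquiv.subLeft x).measurableEmbedding).2 hg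

lemma integrableOn_closedBall_norm_sub_rpow_neg [Nontrivial E] (hb : b < finrank ℝ E) (x : E)
    (r : ℝ) : IntegrableOn (fun y => ‖x - y‖ ^ (-b)) (closedBall x r) μ := by
  rw [← preimage_const_sub_closedBall_zero x r]
  exact integrableOn_preimage_const_sub (integrableOn_closedBall_norm_rpow_neg hb 0 r)

lemma integrableOn_compl_closedBall_norm_sub_rpow_neg (hb : finrank ℝ E < b) (hr : 0 < r) (x : E) :
    IntegrableOn (fun y => ‖x - y‖ ^ (-b)) (closedBall x r)ᶜ μ := by
  rw [← preimage_const_sub_closedBall_zero x r]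
  exact integrableOn_preimage_const_sub (integrableOn_compl_closedBall_norm_rpow_neg hb hr)

lemma setIntegral_closedBall_norm_sub_rpow_neg (hr : 0 < r) (ht : 0 ≤ t) (x : E) :
    ∫ y in closedBall x (r * t), ‖x - y‖ ^ (-b) ∂μ =
      r ^ (finrank ℝ E - b) * ∫ z in closedBall (0 : E) t, ‖z‖ ^ (-b) ∂μ := by
  rw [← preimage_const_sub_closedBall_zero x, setIntegral_preimage_const_sub x fun z => ‖z‖ ^ (-b),
    setIntegral_closedBall_norm_rpow_neg hr ht]

lemma setIntegral_compl_closedBall_norm_sub_rpow_neg (hr : 0 < r) (ht : 0 ≤ t) (x : E) :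
    ∫ y in (closedBall x (r * t))ᶜ, ‖x - y‖ ^ (-b) ∂μ =
      r ^ (finrank ℝ E - b) * ∫ z in (closedBall (0 : E) t)ᶜ, ‖z‖ ^ (-b) ∂μ := by
  rw [← preimage_const_sub_closedBall_zero x, ← preimage_compl,
    setIntegral_preimage_const_sub x fun z => ‖z‖ ^ (-b),
    setIntegral_compl_closedBall_norm_rpow_neg hr ht]

end TranslatedPowerIntegrals

lemma const_mul_rpow_rpow_mul_rpow {C w : ℝ} (hC : 0 ≤ C) (hw : 0 < w) (b p e : ℝ) :
    (C * w ^ b) ^ p * w ^ e = C ^ p * w ^ (b * p + e) := by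
  rw [Real.mul_rpow hC (by positivity), ← Real.rpow_mul hw.le, mul_assoc, ← Real.rpow_add hw]

namespace HasFirstOrderDecay

lemma gagliardoQuotient_le_of_norm_le {E F : Type*} [NormedAddCommGroup E] [NormedSpace ℝ E]
    [NormedAddCommGroup F] {a C p s : ℝ} {f : E → F} (hf : HasFirstOrderDecay a C f) (ha : 0 ≤ a)
    (hp : 0 ≤ p) (hs : 0 ≤ s) {x y : E} (hy₀ : y ≠ 0) (hy : ‖y‖ ≤ 1 + ‖x‖)
    (hxy : (1 + ‖x‖) * (1 / 2) ≤ ‖x - y‖) :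
    gagliardoQuotient p s f x y ≤
      (2 * C) ^ p * ((1 + ‖x‖) * (1 / 2)) ^ (-(finrank ℝ E + p * s)) * ‖y‖ ^ (-(p * a)) := by
  have hC := hf.nonneg
  have hy_pos : 0 < ‖y‖ := norm_pos_iff.2 hy₀
  have hdecay (z : E) (hz : ‖y‖ ≤ 1 + ‖z‖) : ‖f z‖ ≤ C * ‖y‖ ^ (-a) := (hf.norm_le z).trans <|
    mul_le_mul_of_nonneg_left (Real.rpow_le_rpow_of_nonpos hy_pos hz (neg_nonpos.2 ha)) hC
  calc gagliardoQuotient p s f x y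
    _ ≤ (2 * C * ‖y‖ ^ (-a)) ^ p * ‖x - y‖ ^ (-(finrank ℝ E + p * s)) :=
      gagliardoQuotient_le_of_norm_sub_le hp <| by
        linarith [norm_sub_le_of_le (hdecay x hy) (hdecay y (by linarith))]
    _ ≤ (2 * C * ‖y‖ ^ (-a)) ^ p * ((1 + ‖x‖) * (1 / 2)) ^ (-(finrank ℝ E + p * s)) :=
      mul_le_mul_of_nonneg_left
        (Real.rpow_le_rpow_of_nonpos (by positivity) hxy (neg_nonpos.2 (by positivity)))
        (by positivity)
    _ = _ := by
      rw [Real.mul_rpow (by positivity) (by positivity), ← Real.rpow_mul hy_pos.le]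
      ring_nf

variable {E F : Type*} [NormedAddCommGroup E] [NormedSpace ℝ E] [FiniteDimensional ℝ E]
  [Nontrivial E] [MeasurableSpace E] [BorelSpace E] [NormedAddCommGroup F] {μ : Measure E}
  [μ.IsAddHaarMeasure] {a C p s : ℝ} {f : E → F}

lemma integrable_gagliardoQuotient (hf : HasFirstOrderDecay a C f) (ha : 0 ≤ a) (hp : 0 < p)
    (hs : s ∈ Ioo 0 1) (x : E) : Integrable (gagliardoQuotient p s f x) μ :=
  _root_.integrable_gagliardoQuotient hp hs (hf.lipschitzWith ha) (hf.norm_le_const ha) x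

lemma setIntegral_closedBall_gagliardoQuotient_le (hf : HasFirstOrderDecay a C f) (ha : 0 ≤ a)
    (hp : 0 < p) (hs : s ∈ Ioo 0 1) (x : E) :
    ∫ y in closedBall x ((1 + ‖x‖) * (1 / 2)), gagliardoQuotient p s f x y ∂μ ≤
      C ^ p * (∫ z in closedBall (0 : E) (1 / 2), ‖z‖ ^ (-(finrank ℝ E - p * (1 - s))) ∂μ) *
        (1 + ‖x‖) ^ (-(p * (a + s))) := by
  have hC := hf.nonneg
  have hW : 0 < 1 + ‖x‖ := by positivity
  have hb : (finrank ℝ E : ℝ) - p * (1 - s) < finrank ℝ E :=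
    sub_lt_self _ (mul_pos hp (sub_pos.2 hs.2))
  calc ∫ y in closedBall x ((1 + ‖x‖) * (1 / 2)), gagliardoQuotient p s f x y ∂μ
    _ ≤ ∫ y in closedBall x ((1 + ‖x‖) * (1 / 2)),
        (C * (1 + ‖x‖) ^ (-(a + 1))) ^ p * ‖x - y‖ ^ (-(finrank ℝ E - p * (1 - s))) ∂μ := by
      refine setIntegral_mono_on (hf.integrable_gagliardoQuotient ha hp hs x).integrableOn
        ((integrableOn_closedBall_norm_sub_rpow_neg hb x _).const_mul _) measurableSet_closedBall
        fun y hy => gagliardoQuotient_le_of_norm_sub_le_mul hp (by positivity)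
          (hf.norm_sub_le x y ?_)
      rwa [mem_closedBall', dist_eq_norm, mul_one_div] at hy
    _ = (C * (1 + ‖x‖) ^ (-(a + 1))) ^ p * (1 + ‖x‖) ^ (p * (1 - s)) *
        ∫ z in closedBall (0 : E) (1 / 2), ‖z‖ ^ (-(finrank ℝ E - p * (1 - s))) ∂μ := by
      rw [integral_const_mul, setIntegral_closedBall_norm_sub_rpow_neg hW (by norm_num),
        sub_sub_cancel, mul_assoc]
    _ = _ := by
      rw [const_mul_rpow_rpow_mul_rpow hC hW]
      ring_nf

lemma setIntegral_compl_sdiff_gagliardoQuotient_le (hf : HasFirstOrderDecay a C f) (ha : 0 ≤ a)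
    (hp : 0 < p) (hs : s ∈ Ioo 0 1) (x : E) :
    ∫ y in (closedBall x ((1 + ‖x‖) * (1 / 2)))ᶜ \ closedBall 0 (1 + ‖x‖),
        gagliardoQuotient p s f x y ∂μ ≤
      (2 * C) ^ p * (∫ z in (closedBall (0 : E) (1 / 2))ᶜ, ‖z‖ ^ (-(finrank ℝ E + p * s)) ∂μ) *
        (1 + ‖x‖) ^ (-(p * (a + s))) := by
  have hC := hf.nonneg
  have hW : 0 < 1 + ‖x‖ := by positivity
  have hb : (finrank ℝ E : ℝ) < finrank ℝ E + p * s := lt_add_of_pos_right _ (mul_pos hp hs.1)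
  have hint : IntegrableOn
      (fun y => (2 * C * (1 + ‖x‖) ^ (-a)) ^ p * ‖x - y‖ ^ (-(finrank ℝ E + p * s)))
      (closedBall x ((1 + ‖x‖) * (1 / 2)))ᶜ μ :=
    (integrableOn_compl_closedBall_norm_sub_rpow_neg hb (by positivity) x).const_mul _
  calc ∫ y in (closedBall x ((1 + ‖x‖) * (1 / 2)))ᶜ \ closedBall 0 (1 + ‖x‖),
        gagliardoQuotient p s f x y ∂μ
    _ ≤ ∫ y in (closedBall x ((1 + ‖x‖) * (1 / 2)))ᶜ \ closedBall 0 (1 + ‖x‖),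
        (2 * C * (1 + ‖x‖) ^ (-a)) ^ p * ‖x - y‖ ^ (-(finrank ℝ E + p * s)) ∂μ := by
      refine setIntegral_mono_on (hf.integrable_gagliardoQuotient ha hp hs x).integrableOn
        (hint.mono_set sdiff_subset) (measurableSet_closedBall.compl.diff measurableSet_closedBall)
        fun y hy => gagliardoQuotient_le_of_norm_sub_le hp.le ?_
      have hxy : 1 + ‖x‖ < ‖y‖ := by simpa using hy.2
      have hfy : ‖f y‖ ≤ C * (1 + ‖x‖) ^ (-a) := (hf.norm_le y).trans <|
        mul_le_mul_of_nonneg_left (Real.rpow_le_rpow_of_nonpos hW (by linarith) (neg_nonpos.2 ha))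
          hC
      linarith [norm_sub_le_of_le (hf.norm_le x) hfy]
    _ ≤ ∫ y in (closedBall x ((1 + ‖x‖) * (1 / 2)))ᶜ,
        (2 * C * (1 + ‖x‖) ^ (-a)) ^ p * ‖x - y‖ ^ (-(finrank ℝ E + p * s)) ∂μ :=
      setIntegral_mono_set hint (.of_forall fun y => by positivity) sdiff_subset.eventuallyLE
    _ = (2 * C * (1 + ‖x‖) ^ (-a)) ^ p * (1 + ‖x‖) ^ (-(p * s)) *
        ∫ z in (closedBall (0 : E) (1 / 2))ᶜ, ‖z‖ ^ (-(finrank ℝ E + p * s)) ∂μ := by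
      rw [integral_const_mul, setIntegral_compl_closedBall_norm_sub_rpow_neg hW (by norm_num),
        sub_add_cancel_left, ← mul_assoc]
    _ = _ := by
      rw [const_mul_rpow_rpow_mul_rpow (by positivity) hW]
      ring_nf

lemma setIntegral_compl_inter_gagliardoQuotient_le (hf : HasFirstOrderDecay a C f) (ha : 0 ≤ a)
    (hp : 0 < p) (hs : s ∈ Ioo 0 1) (hpa : p * a < finrank ℝ E) (x : E) :
    ∫ y in (closedBall x ((1 + ‖x‖) * (1 / 2)))ᶜ ∩ closedBall 0 (1 + ‖x‖),
        gagliardoQuotient p s f x y ∂μ ≤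
      (2 * C) ^ p * (1 / 2) ^ (-(finrank ℝ E + p * s)) *
        (∫ z in closedBall (0 : E) 1, ‖z‖ ^ (-(p * a)) ∂μ) * (1 + ‖x‖) ^ (-(p * (a + s))) := by
  have hC := hf.nonneg
  have hW : 0 < 1 + ‖x‖ := by positivity
  set K := (2 * C) ^ p * ((1 + ‖x‖) * (1 / 2)) ^ (-(finrank ℝ E + p * s)) with hK
  have hint : IntegrableOn (fun y => K * ‖y‖ ^ (-(p * a))) (closedBall 0 (1 + ‖x‖)) μ :=
    (integrableOn_closedBall_norm_rpow_neg hpa 0 _).const_mul K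
  calc ∫ y in (closedBall x ((1 + ‖x‖) * (1 / 2)))ᶜ ∩ closedBall 0 (1 + ‖x‖),
        gagliardoQuotient p s f x y ∂μ
    _ ≤ ∫ y in (closedBall x ((1 + ‖x‖) * (1 / 2)))ᶜ ∩ closedBall 0 (1 + ‖x‖),
        K * ‖y‖ ^ (-(p * a)) ∂μ := by
      refine setIntegral_mono_on_ae (hf.integrable_gagliardoQuotient ha hp hs x).integrableOn
        (hint.mono_set inter_subset_right)
        (measurableSet_closedBall.compl.inter measurableSet_closedBall) ?_
      filter_upwards [Measure.ae_ne μ 0] with y hy₀ ⟨hxy, hy⟩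
      rw [mem_compl_iff, mem_closedBall', not_le, dist_eq_norm] at hxy
      exact hf.gagliardoQuotient_le_of_norm_le ha hp.le hs.1.le hy₀
        (mem_closedBall_zero_iff.1 hy) hxy.le
    _ ≤ ∫ y in closedBall (0 : E) ((1 + ‖x‖) * 1), K * ‖y‖ ^ (-(p * a)) ∂μ := by
      rw [mul_one]
      exact setIntegral_mono_set hint (.of_forall fun y => by positivity)
        inter_subset_right.eventuallyLE
    _ = K * ((1 + ‖x‖) ^ (finrank ℝ E - p * a) *
        ∫ z in closedBall (0 : E) 1, ‖z‖ ^ (-(p * a)) ∂μ) := by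
      rw [integral_const_mul, setIntegral_closedBall_norm_rpow_neg hW zero_le_one]
    _ = (2 * C) ^ p * (1 / 2) ^ (-(finrank ℝ E + p * s)) *
        (∫ z in closedBall (0 : E) 1, ‖z‖ ^ (-(p * a)) ∂μ) *
        ((1 + ‖x‖) ^ (-(finrank ℝ E + p * s)) * (1 + ‖x‖) ^ (finrank ℝ E - p * a)) := by
      rw [hK, Real.mul_rpow hW.le (by norm_num)]
      ring
    _ = _ := by
      rw [← Real.rpow_add hW]
      ring_nf

lemma exists_gagliardoDensity_le (hf : HasFirstOrderDecay a C f) (ha : 0 ≤ a) (hp : 0 < p)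
    (hs : s ∈ Ioo 0 1) (hpa : p * a < finrank ℝ E) :
    ∃ K > 0, ∀ x, gagliardoDensity μ p s f x ≤ K * (1 + ‖x‖) ^ (-(p * (a + s))) := by
  set K₁ := C ^ p * ∫ z in closedBall (0 : E) (1 / 2), ‖z‖ ^ (-(finrank ℝ E - p * (1 - s))) ∂μ
  set K₂ := (2 * C) ^ p * (1 / 2) ^ (-(finrank ℝ E + p * s)) *
    ∫ z in closedBall (0 : E) 1, ‖z‖ ^ (-(p * a)) ∂μ
  set K₃ := (2 * C) ^ p * ∫ z in (closedBall (0 : E) (1 / 2))ᶜ, ‖z‖ ^ (-(finrank ℝ E + p * s)) ∂μ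
  refine ⟨|K₁ + (K₂ + K₃)| + 1, by positivity, fun x => ?_⟩
  have hint := hf.integrable_gagliardoQuotient (μ := μ) ha hp hs x
  calc gagliardoDensity μ p s f x
    _ = _ + (_ + _) := by
      rw [gagliardoDensity, ← integral_add_compl
          (measurableSet_closedBall (x := x) (ε := (1 + ‖x‖) * (1 / 2))) hint,
        ← integral_inter_add_sdiff (s := (closedBall x ((1 + ‖x‖) * (1 / 2)))ᶜ)
          (measurableSet_closedBall (x := 0) (ε := 1 + ‖x‖))
          hint.integrableOn]
    _ ≤ K₁ * (1 + ‖x‖) ^ (-(p * (a + s))) + (K₂ * (1 + ‖x‖) ^ (-(p * (a + s))) +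
        K₃ * (1 + ‖x‖) ^ (-(p * (a + s)))) :=
      add_le_add (hf.setIntegral_closedBall_gagliardoQuotient_le ha hp hs x)
        (add_le_add (hf.setIntegral_compl_inter_gagliardoQuotient_le ha hp hs hpa x)
          (hf.setIntegral_compl_sdiff_gagliardoQuotient_le ha hp hs x))
    _ = (K₁ + (K₂ + K₃)) * (1 + ‖x‖) ^ (-(p * (a + s))) := by ring
    _ ≤ (|K₁ + (K₂ + K₃)| + 1) * (1 + ‖x‖) ^ (-(p * (a + s))) := by
      refine mul_le_mul_of_nonneg_right ?_ (by positivity)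
      exact (le_abs_self _).trans (le_add_of_nonneg_right zero_le_one)

end HasFirstOrderDecay

lemma lps_eq_gagliardoDensity (d : ℕ) (p s : ℝ) (f : Ed d → ℝ) :
    lps d p s f = gagliardoDensity volume p s f := by
  simp only [funext_iff, lps, gagliardoDensity, gagliardoQuotient, Real.norm_eq_abs,
    finrank_euclideanSpace_fin, implies_true]

lemma riesz_eq_rieszPotential (d : ℕ) (s κ : ℝ) (φ : Ed d → ℝ) :
    riesz d s κ φ = rieszPotential volume (d - 2 * s) (fun y => κ * φ y) := by
  ext x
  exact integral_congr_ae (.of_forall fun y => by ring)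

theorem stmt11_general {E : Type*} [NormedAddCommGroup E] [NormedSpace ℝ E]
    [FiniteDimensional ℝ E] [MeasurableSpace E] [BorelSpace E] {μ : Measure E}
    [μ.IsAddHaarMeasure] {a p s : ℝ} (ha₀ : 0 ≤ a) (ha : a < finrank ℝ E) (hs : s ∈ Ioo 0 1)
    (hp : 0 < p) (hpa : p * a < finrank ℝ E) {φ : E → ℝ} {L : ℝ≥0} (hφ : LipschitzWith L φ)
    (hφc : HasCompactSupport φ) :
    Continuous (gagliardoDensity μ p s (rieszPotential μ a φ)) ∧ ∃ K > 0, ∀ x,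
      gagliardoDensity μ p s (rieszPotential μ a φ) x ≤ K * (1 + ‖x‖) ^ (-(p * (a + s))) := by
  have : Nontrivial E := nontrivial_of_finrank_pos (R := ℝ) (by exact_mod_cast ha₀.trans_lt ha)
  obtain ⟨C, hdecay⟩ := exists_hasFirstOrderDecay_rieszPotential (μ := μ) ha₀ ha hφ hφc
  exact ⟨continuous_gagliardoDensity hp hs (hdecay.lipschitzWith ha₀) (hdecay.norm_le_const ha₀),
    hdecay.exists_gagliardoDensity_le ha₀ hp hs hpa⟩

theorem stmt11 (d : ℕ) (hd : 1 ≤ d) (s : ℝ) (hs : s ∈ Set.Ioo (0:ℝ) 1)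
    (hds : 2 * s < (d:ℝ)) (κ : ℝ) (hκ : 0 < κ)
    (p : ℝ) (hp1 : 1 < p) (hp2 : p < (d:ℝ) / ((d:ℝ) - 2 * s))
    (φ : Ed d → ℝ) (hφ : ContDiff ℝ (⊤ : ℕ∞) φ) (hφc : HasCompactSupport φ) :
    Continuous (lps d p s (riesz d s κ φ)) ∧
    ∃ K > (0:ℝ), ∀ x : Ed d,
      lps d p s (riesz d s κ φ) x ≤ K * (1 + ‖x‖) ^ (-(p * ((d:ℝ) - s))) := by
  have ha : 0 < (d : ℝ) - 2 * s := sub_pos.2 hds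
  have hκφc : HasCompactSupport fun y => κ * φ y := hφc.mul_left
  obtain ⟨L, hL⟩ := (contDiff_const.mul hφ).lipschitzWith_of_hasCompactSupport hκφc (by simp)
  rw [lps_eq_gagliardoDensity, riesz_eq_rieszPotential, show (d : ℝ) - s = d - 2 * s + s by ring]
  exact stmt11_general ha.le (by simpa using hs.1) hs (one_pos.trans hp1)
    (by simpa using (lt_div_iff₀ ha).1 hp2) hL hκφc
end
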